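/- There exists a constant C > 0, depending only on ψ, such that for every dyadic interval K ⊆ [0,1), Σ_{(I,J)} |∫_{Q̃_K} G_I(x+iy) \overline{G_J(x+iy)} (1-e^{-4πy}) e^{-2πy} dx dy| ≤ C |K|, where the (absolutely convergent) sum runs over all ordered pairs (I,J) of dyadic intervals contained in [0,1) EXCEPT those pairs with I = J and I ⊆ K. -/

import Mathlib

open MeasureTheory Complex Real
open scoped FourierTransform

noncomputable section

/-- The length `|I| = 2^{-j}` of a dyadic interval of generation `j`. -/
def len (j : ℤ) : ℝ := (2 : ℝ) ^ (-j)

/-- The center `C_I = 2^{-j}(k + 1/2)` of the dyadic interval `I = [2^{-j}k, 2^{-j}(k+1))`. -/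
def ctr (j k : ℤ) : ℝ := (2 : ℝ) ^ (-j) * ((k : ℝ) + 1 / 2)

/-- `ψ_I(x) = |I|^{-1/2} ψ((x - C_I)/|I|)`. -/
def psiI (ψ : SchwartzMap ℝ ℂ) (j k : ℤ) (x : ℝ) : ℂ :=
  (((Real.sqrt (len j))⁻¹ : ℝ) : ℂ) * ψ ((x - ctr j k) / len j)

/-- The Poisson extension to the upper half-plane of `f_I = |I|^{1/2} D ψ_I`, where `D` is the
Fourier multiplier with symbol `4π|ξ|`:
`F_I(x+iy) = ∫ 4π|ξ| |I|^{1/2} ψ̂_I(ξ) e^{-2π|ξ|y} e^{2πixξ} dξ`. -/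
def FI (ψ : SchwartzMap ℝ ℂ) (j k : ℤ) (x y : ℝ) : ℂ :=
  ∫ ξ : ℝ, ((4 * π * |ξ| * Real.sqrt (len j) * Real.exp (-(2 * π * |ξ| * y)) : ℝ) : ℂ) *
    𝓕 (psiI ψ j k) ξ * Complex.exp (2 * (π : ℂ) * Complex.I * (x : ℂ) * (ξ : ℂ))

/-- The periodization `G_I(x+iy) = Σ_{k∈ℤ} F_I(x-k+iy)`. -/
def GI (ψ : SchwartzMap ℝ ℂ) (j k : ℤ) (x y : ℝ) : ℂ :=
  ∑' m : ℤ, FI ψ j k (x - (m : ℝ)) y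


/-- The dyadic interval `[2^{-j}k, 2^{-j}(k+1))` as a subset of `ℝ` (indices in `ℕ`, so that
with `k < 2^j` these are exactly the dyadic subintervals of `[0,1)`). -/
def dySet (j k : ℕ) : Set ℝ := Set.Ico ((k : ℝ) * len (j : ℤ)) (((k : ℝ) + 1) * len (j : ℤ))

/-- The vertical extent of `Q̃_K` for `K` of length `2^{-j}`: `(0, -log(1-|K|)/(2π))`,
interpreted as `(0, ∞)` when `|K| = 1`. -/
def ySet (j : ℕ) : Set ℝ :=
  if j = 0 then Set.Ioi 0 else Set.Ioo 0 (-(Real.log (1 - len (j : ℤ))) / (2 * π))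

/-- Index type: ordered pairs `(I, J)` of dyadic subintervals of `[0,1)` except those with
`I = J ⊆ K`, where `K` is the dyadic interval indexed by `(jK, kK)`. -/
def pairIdx (jK kK : ℕ) : Type :=
  {q : (ℕ × ℕ) × ℕ × ℕ // q.1.2 < 2 ^ q.1.1 ∧ q.2.2 < 2 ^ q.2.1 ∧
    ¬(q.1 = q.2 ∧ dySet q.1.1 q.1.2 ⊆ dySet jK kK)}

/-!
By Plancherel and Green's formula, the integral of `y F_I \overline{F_J}` over the half-plane is a
multiple of `⟨ψ_I, ψ_J⟩`. Unfolding the periodization, the integral of `y G_I \overline{G_J}` over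
the strip `[0,1) × (0,∞)` therefore vanishes for `I ≠ J`, because no integer translate of `J`
equals `I`. The weight `(1 - e^{-4πy}) e^{-2πy}` is `4πy + O(y²)`, so for distinct `I, J ⊆ K` the
integral over `Q̃_K` is, up to an error with the better weight `y²`, minus the integral of
`4πy G_I \overline{G_J}` over the rest of the strip, where both factors are small. If one of the
intervals is not contained in `K`, cancellation is not needed.

Since `ψ̂` vanishes near `0`, the functions `F_I` decay away from `I`, and sums of `|G_I|` over
families of intervals are controlled pointwise by the distance to the family. Each of the three
contributions is then dominated by one integrable kernel, concentrated near the endpoints of `K`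
and of total mass `O(|K|)`.
-/

section

open Set Filter
open scoped ENNReal Topology ComplexConjugate SchwartzMap

/-! ### Decay of Poisson extensions -/

/-- The Fourier–Laplace transform `∫₀^∞ h(η) e^{2πizη} dη` of `h` on the half-line; for
`0 ≤ z.im` the exponential is bounded. -/
def fourierLaplace (h : ℝ → ℂ) (z : ℂ) : ℂ :=
  ∫ η in Ioi (0 : ℝ), h η * cexp (2 * π * I * z * η)

lemma norm_cexp_two_pi_mul_I_mul_le_one {z : ℂ} (hz : 0 ≤ z.im) {η : ℝ} (hη : 0 ≤ η) :
    ‖cexp (2 * π * I * z * η)‖ ≤ 1 := by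
  have hre : (2 * π * I * z * η).re = -(2 * π * (z.im * η)) := by simp [mul_assoc]
  rw [norm_exp, hre, Real.exp_le_one_iff, neg_nonpos]
  positivity

lemma norm_mul_cexp_le (a : ℂ) {z : ℂ} (hz : 0 ≤ z.im) {η : ℝ} (hη : 0 ≤ η) :
    ‖a * cexp (2 * π * I * z * η)‖ ≤ ‖a‖ := by
  rw [norm_mul]
  exact mul_le_of_le_one_right (norm_nonneg _) (norm_cexp_two_pi_mul_I_mul_le_one hz hη)

lemma integrableOn_mul_cexp {h : ℝ → ℂ} (hh : Integrable h) {z : ℂ} (hz : 0 ≤ z.im) :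
    IntegrableOn (fun η : ℝ => h η * cexp (2 * π * I * z * η)) (Ioi 0) := by
  refine hh.restrict.mono (hh.aestronglyMeasurable.restrict.mul
    (by fun_prop : Continuous fun η : ℝ => cexp (2 * π * I * z * η)).aestronglyMeasurable) ?_
  filter_upwards [ae_restrict_mem measurableSet_Ioi] with η hη
  exact norm_mul_cexp_le _ hz (le_of_lt hη)

lemma norm_fourierLaplace_le {h : ℝ → ℂ} (hh : Integrable h) {z : ℂ} (hz : 0 ≤ z.im) :
    ‖fourierLaplace h z‖ ≤ ∫ η, ‖h η‖ :=
  calc ‖fourierLaplace h z‖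
      ≤ ∫ η in Ioi (0 : ℝ), ‖h η‖ :=
        norm_integral_le_of_norm_le hh.norm.integrableOn <| by
          filter_upwards [ae_restrict_mem measurableSet_Ioi] with η hη
          exact norm_mul_cexp_le _ hz (le_of_lt hη)
    _ ≤ ∫ η, ‖h η‖ := setIntegral_le_integral hh.norm (ae_of_all _ fun _ => norm_nonneg _)

lemma mul_fourierLaplace (h : 𝓢(ℝ, ℂ)) (h0 : h 0 = 0) {z : ℂ} (hz : 0 ≤ z.im) :
    2 * π * I * z * fourierLaplace h z =
      -fourierLaplace (SchwartzMap.derivCLM ℂ ℂ h) z := by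
  have hexp : ∀ η : ℝ, HasDerivAt (fun t : ℝ => cexp (2 * π * I * z * t))
      (2 * π * I * z * cexp (2 * π * I * z * η)) η := fun η => by
    simpa [mul_comm] using ((hasDerivAt_id η).ofReal_comp.const_mul (2 * π * I * z)).cexp
  have hzero : Tendsto (⇑h * fun t : ℝ => cexp (2 * π * I * z * t)) (𝓝[>] 0) (𝓝 0) := by
    have hcont : Continuous (⇑h * fun t : ℝ => cexp (2 * π * I * z * t)) :=
      h.continuous.mul (by fun_prop)
    simpa [h0] using (hcont.tendsto 0).mono_left nhdsWithin_le_nhds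
  have hinfty : Tendsto (⇑h * fun t : ℝ => cexp (2 * π * I * z * t)) atTop (𝓝 0) := by
    refine squeeze_zero_norm' ?_
      (tendsto_zero_iff_norm_tendsto_zero.1 (h.tendsto_cocompact.mono_left atTop_le_cocompact))
    filter_upwards [eventually_ge_atTop 0] with η hη using norm_mul_cexp_le _ hz hη
  have hparts := integral_Ioi_mul_deriv_eq_deriv_mul (u := h) (a := (0 : ℝ))
    (fun η _ => h.differentiableAt.hasDerivAt) (fun η _ => hexp η)
    (by simpa [Pi.mul_def, mul_left_comm, IntegrableOn] using
      (integrableOn_mul_cexp h.integrable hz).const_mul (2 * π * I * z))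
    (integrableOn_mul_cexp (SchwartzMap.derivCLM ℂ ℂ h).integrable hz) hzero hinfty
  simpa [fourierLaplace, ← integral_const_mul, mul_left_comm] using hparts

lemma exists_pow_mul_norm_fourierLaplace_le (n : ℕ) (h : 𝓢(ℝ, ℂ)) (h0 : ⇑h =ᶠ[𝓝 0] 0) :
    ∃ C : ℝ, ∀ z : ℂ, 0 ≤ z.im → ‖z‖ ^ n * ‖fourierLaplace h z‖ ≤ C := by
  induction n generalizing h with
  | zero => exact ⟨∫ η, ‖h η‖, fun z hz => by simpa using norm_fourierLaplace_le h.integrable hz⟩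
  | succ n ih =>
    obtain ⟨C, hC⟩ := ih (SchwartzMap.derivCLM ℂ ℂ h) (h0.deriv.trans (by simp))
    refine ⟨C / (2 * π), fun z hz => ?_⟩
    have hnorm : 2 * π * ‖z‖ * ‖fourierLaplace h z‖
        = ‖fourierLaplace (SchwartzMap.derivCLM ℂ ℂ h) z‖ := by
      simpa [abs_of_pos pi_pos] using congrArg norm (mul_fourierLaplace h h0.eq_of_nhds hz)
    rw [le_div_iff₀ (by positivity)]
    calc ‖z‖ ^ (n + 1) * ‖fourierLaplace h z‖ * (2 * π)
        = ‖z‖ ^ n * (2 * π * ‖z‖ * ‖fourierLaplace h z‖) := by ring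
      _ ≤ C := hnorm ▸ hC z hz

lemma exists_norm_fourierLaplace_le (n : ℕ) (h : 𝓢(ℝ, ℂ)) (h0 : ⇑h =ᶠ[𝓝 0] 0) :
    ∃ C : ℝ, ∀ z : ℂ, 0 ≤ z.im → ‖fourierLaplace h z‖ ≤ C / (1 + ‖z‖) ^ n := by
  obtain ⟨A, hA⟩ := exists_pow_mul_norm_fourierLaplace_le 0 h h0
  obtain ⟨B, hB⟩ := exists_pow_mul_norm_fourierLaplace_le n h h0
  refine ⟨2 ^ (n - 1) * (A + B), fun z hz => ?_⟩
  rw [le_div_iff₀' (by positivity)]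
  calc (1 + ‖z‖) ^ n * ‖fourierLaplace h z‖
      ≤ 2 ^ (n - 1) * (1 ^ n + ‖z‖ ^ n) * ‖fourierLaplace h z‖ := by
        gcongr
        exact add_pow_le zero_le_one (norm_nonneg z) n
    _ = 2 ^ (n - 1) * (‖z‖ ^ 0 * ‖fourierLaplace h z‖ + ‖z‖ ^ n * ‖fourierLaplace h z‖) := by
        ring
    _ ≤ 2 ^ (n - 1) * (A + B) := by
        gcongr
        exacts [hA z hz, hB z hz]

/-- The symbol `4π|ξ|e^{-2π|ξ|y}` of the Poisson extension to height `y` of the Fourier multiplier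
`D` with symbol `4π|ξ|`. -/
def poissonSymbol (y ξ : ℝ) : ℝ := 4 * π * |ξ| * Real.exp (-(2 * π * |ξ| * y))

/-- The Poisson extension at `x + iy` of the function with Fourier transform `4π|ξ|φ(ξ)`. -/
def poissonExt (φ : ℝ → ℂ) (x y : ℝ) : ℂ :=
  ∫ ξ : ℝ, (poissonSymbol y ξ : ℂ) * φ ξ * cexp (2 * π * I * x * ξ)

@[fun_prop]
lemma continuous_poissonSymbol : Continuous fun p : ℝ × ℝ => poissonSymbol p.1 p.2 := by
  unfold poissonSymbol
  fun_prop

lemma poissonSymbol_nonneg (y ξ : ℝ) : 0 ≤ poissonSymbol y ξ := by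
  unfold poissonSymbol
  positivity

lemma poissonSymbol_le {y : ℝ} (hy : 0 ≤ y) (ξ : ℝ) : poissonSymbol y ξ ≤ 4 * π * |ξ| :=
  mul_le_of_le_one_right (by positivity) (Real.exp_le_one_iff.2 (neg_nonpos.2 (by positivity)))

lemma integrable_poissonSymbol_mul (φ : 𝓢(ℝ, ℂ)) {y : ℝ} (hy : 0 ≤ y) :
    Integrable fun ξ => (poissonSymbol y ξ : ℂ) * φ ξ := by
  have hsymbol : Continuous (poissonSymbol y) :=
    continuous_poissonSymbol.comp (by fun_prop : Continuous fun ξ : ℝ => (y, ξ))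
  refine ((φ.integrable_pow_mul volume 1).const_mul (4 * π)).mono'
    ((continuous_ofReal.comp hsymbol).mul φ.continuous).aestronglyMeasurable
    (ae_of_all _ fun ξ => ?_)
  rw [norm_mul, norm_real, Real.norm_of_nonneg (poissonSymbol_nonneg y ξ), pow_one,
    Real.norm_eq_abs, ← mul_assoc]
  gcongr
  exact poissonSymbol_le hy ξ

lemma integrable_poissonExt_integrand (φ : 𝓢(ℝ, ℂ)) (x : ℝ) {y : ℝ} (hy : 0 ≤ y) :
    Integrable fun ξ : ℝ => (poissonSymbol y ξ : ℂ) * φ ξ * cexp (2 * π * I * x * ξ) := by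
  refine (integrable_poissonSymbol_mul φ hy).mul_bdd (c := 1)
    (Continuous.aestronglyMeasurable (by fun_prop)) (ae_of_all _ fun ξ => ?_)
  simp [norm_exp]

lemma poissonSymbol_neg (y ξ : ℝ) : poissonSymbol y (-ξ) = poissonSymbol y ξ := by
  simp only [poissonSymbol, abs_neg]

lemma poissonSymbol_mul_cexp (x y : ℝ) {η : ℝ} (hη : 0 ≤ η) :
    (poissonSymbol y η : ℂ) * cexp (2 * π * I * x * η) =
      (4 * π * η : ℝ) * cexp (2 * π * I * (⟨x, y⟩ : ℂ) * η) := by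
  rw [poissonSymbol, abs_of_nonneg hη, ofReal_mul, ofReal_exp, mul_assoc, ← Complex.exp_add,
    mk_eq_add_mul_I]
  congr 2
  push_cast
  linear_combination (-2 * π * y * η : ℂ) * I_mul_I

lemma poissonExt_eq_fourierLaplace_add (φ : 𝓢(ℝ, ℂ)) (x : ℝ) {y : ℝ} (hy : 0 ≤ y) :
    poissonExt φ x y = fourierLaplace (fun η => (4 * π * η) • φ η) ⟨x, y⟩ +
      fourierLaplace (fun η => (4 * π * η) • φ (-η)) ⟨-x, y⟩ := by
  have hint := integrable_poissonExt_integrand φ x hy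
  rw [poissonExt, ← intervalIntegral.integral_Iic_add_Ioi hint.integrableOn hint.integrableOn
    (b := 0), add_comm, ← neg_zero, ← integral_comp_neg_Ioi, neg_zero]
  congr 1 <;> refine setIntegral_congr_fun measurableSet_Ioi fun η hη => ?_
  · simp only [real_smul]
    rw [mul_right_comm, poissonSymbol_mul_cexp x y (le_of_lt hη), mul_right_comm]
  · simp only [real_smul]
    rw [poissonSymbol_neg, mul_right_comm, ofReal_neg, ← neg_mul_comm, ← mul_neg, ← ofReal_neg,
      poissonSymbol_mul_cexp (-x) y (le_of_lt hη), mul_right_comm]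

lemma exists_norm_fourierLaplace_linear_smul_le (n : ℕ) (φ : 𝓢(ℝ, ℂ)) (h0 : ⇑φ =ᶠ[𝓝 0] 0) :
    ∃ C : ℝ, 0 ≤ C ∧ ∀ x y : ℝ, 0 ≤ y →
      ‖fourierLaplace (fun η => (4 * π * η) • φ η) ⟨x, y⟩‖ ≤ C / (1 + |x| + y) ^ n := by
  have htemp : Function.HasTemperateGrowth fun η : ℝ => 4 * π * η := by fun_prop
  have hcoe := SchwartzMap.smulLeftCLM_apply (𝕜 := ℝ) htemp φ
  obtain ⟨C, hC⟩ := exists_norm_fourierLaplace_le n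
    (SchwartzMap.smulLeftCLM ℂ (fun η : ℝ => 4 * π * η) φ) (by
      filter_upwards [h0] with η hη
      simp [hcoe, hη])
  have hC0 : 0 ≤ C := (norm_nonneg _).trans ((hC 0 le_rfl).trans_eq (by simp))
  refine ⟨2 ^ n * C, by positivity, fun x y hy => ?_⟩
  have hre : |x| ≤ ‖(⟨x, y⟩ : ℂ)‖ := abs_re_le_norm ⟨x, y⟩
  have him : |y| ≤ ‖(⟨x, y⟩ : ℂ)‖ := abs_im_le_norm ⟨x, y⟩
  rw [abs_of_nonneg hy] at him
  calc ‖fourierLaplace (fun η => (4 * π * η) • φ η) ⟨x, y⟩‖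
      ≤ C / (1 + ‖(⟨x, y⟩ : ℂ)‖) ^ n := by simpa only [hcoe] using! hC ⟨x, y⟩ hy
    _ = 2 ^ n * C / (2 * (1 + ‖(⟨x, y⟩ : ℂ)‖)) ^ n := by
      rw [mul_pow, mul_div_mul_left _ _ (by positivity)]
    _ ≤ 2 ^ n * C / (1 + |x| + y) ^ n := by
      gcongr
      linarith

/-- The symbol `|ξ|` is smooth away from `0` only, which is where the vanishing of `φ` near `0`
enters. -/
lemma exists_norm_poissonExt_le (n : ℕ) (φ : 𝓢(ℝ, ℂ)) (h0 : ⇑φ =ᶠ[𝓝 0] 0) :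
    ∃ C : ℝ, 0 ≤ C ∧ ∀ x y : ℝ, 0 ≤ y → ‖poissonExt φ x y‖ ≤ C / (1 + |x| + y) ^ n := by
  let φneg := SchwartzMap.compCLMOfContinuousLinearEquiv ℂ (ContinuousLinearEquiv.neg ℝ) φ
  have hneg : ⇑φneg =ᶠ[𝓝 0] 0 := h0.comp_tendsto (continuous_neg.tendsto' (0 : ℝ) 0 neg_zero)
  obtain ⟨A, hA0, hA⟩ := exists_norm_fourierLaplace_linear_smul_le n φ h0
  obtain ⟨B, hB0, hB⟩ := exists_norm_fourierLaplace_linear_smul_le n φneg hneg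
  refine ⟨A + B, add_nonneg hA0 hB0, fun x y hy => ?_⟩
  rw [poissonExt_eq_fourierLaplace_add φ x hy, add_div]
  refine (norm_add_le _ _).trans (add_le_add (hA x y hy) ?_)
  simpa only [abs_neg] using! hB (-x) y hy

/-! ### Orthogonality in the half-plane -/

lemma integral_fourier_mul_conj_fourier {V : Type*} [NormedAddCommGroup V] [InnerProductSpace ℝ V]
    [FiniteDimensional ℝ V] [MeasurableSpace V] [BorelSpace V] {f g : V → ℂ}
    (hfc : Continuous f) (hf : Integrable f) (hg : Integrable g) (hff : Integrable (𝓕 f)) :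
    ∫ x, 𝓕 f x * conj (𝓕 g x) = ∫ ξ, f ξ * conj (g ξ) := by
  have hsesq := VectorFourier.integral_sesq_fourierIntegral_eq_neg_flip (μ := volume)
    (ν := volume) (L := innerₗ V) (innerSL ℂ) Real.continuous_fourierChar continuous_inner hg hff
  rw [flip_innerₗ] at hsesq
  calc ∫ x, 𝓕 f x * conj (𝓕 g x)
      = ∫ ξ, 𝓕⁻ (𝓕 f) ξ * conj (g ξ) := hsesq
    _ = ∫ ξ, f ξ * conj (g ξ) := by rw [hfc.fourierInv_fourier_eq hf hff]

lemma poissonExt_eq_fourier (φ : ℝ → ℂ) (x y : ℝ) :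
    poissonExt φ x y = 𝓕 (fun ξ => (poissonSymbol y ξ : ℂ) * φ ξ) (-x) := by
  rw [Real.fourier_eq', poissonExt]
  congr 1 with ξ
  rw [smul_eq_mul, mul_comm]
  congr 2
  simp
  ring

lemma stronglyMeasurable_poissonExt {φ : ℝ → ℂ} (hφ : Continuous φ) :
    StronglyMeasurable fun p : ℝ × ℝ => poissonExt φ p.1 p.2 :=
  StronglyMeasurable.integral_prod_right (f := fun (p : ℝ × ℝ) (ξ : ℝ) =>
    (poissonSymbol p.2 ξ : ℂ) * φ ξ * cexp (2 * π * I * p.1 * ξ)) <|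
    Continuous.stronglyMeasurable (by unfold Function.uncurry poissonSymbol; fun_prop)

lemma integrable_inv_one_add_abs_sq : Integrable fun x : ℝ => ((1 + |x|) ^ 2)⁻¹ := by
  refine (integrable_one_add_norm (E := ℝ) (μ := volume) (r := 2) (by simp)).congr
    (ae_of_all _ fun x => ?_)
  beta_reduce
  rw [Real.rpow_neg (by positivity), Real.rpow_two, Real.norm_eq_abs]

lemma integrable_poissonExt (φ : 𝓢(ℝ, ℂ)) (h0 : ⇑φ =ᶠ[𝓝 0] 0) {y : ℝ} (hy : 0 ≤ y) :
    Integrable fun x => poissonExt φ x y := by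
  obtain ⟨C, hC0, hC⟩ := exists_norm_poissonExt_le 2 φ h0
  refine (integrable_inv_one_add_abs_sq.const_mul C).mono'
    ((stronglyMeasurable_poissonExt φ.continuous).comp_measurable
      (by fun_prop : Measurable fun x : ℝ => (x, y))).aestronglyMeasurable
    (ae_of_all _ fun x => (hC x y hy).trans ?_)
  rw [div_eq_mul_inv]
  gcongr ?_ * (?_ ^ 2)⁻¹
  exact le_add_of_nonneg_right hy

lemma ae_prod_snd_pos {X : Type*} [MeasurableSpace X] (μ : Measure X) [SFinite μ] :
    ∀ᵐ p : X × ℝ ∂μ.prod (volume.restrict (Ioi (0 : ℝ))), 0 < p.2 :=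
  Measure.quasiMeasurePreserving_snd.ae (ae_restrict_mem measurableSet_Ioi)

lemma integrable_poissonExt_mul_conj (φ χ : 𝓢(ℝ, ℂ)) (hφ : ⇑φ =ᶠ[𝓝 0] 0)
    (hχ : ⇑χ =ᶠ[𝓝 0] 0) :
    Integrable (fun p : ℝ × ℝ => poissonExt φ p.1 p.2 * conj (poissonExt χ p.1 p.2) * p.2)
      (volume.prod (volume.restrict (Ioi 0))) := by
  obtain ⟨A, hA0, hA⟩ := exists_norm_poissonExt_le 3 φ hφ
  obtain ⟨B, hB0, hB⟩ := exists_norm_poissonExt_le 3 χ hχ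
  have hdom := (integrable_inv_one_add_abs_sq.mul_prod
    (integrable_inv_one_add_abs_sq.restrict (s := Ioi 0))).const_mul (A * B)
  have hmeas := ((stronglyMeasurable_poissonExt φ.continuous).mul
    (continuous_conj.comp_stronglyMeasurable (stronglyMeasurable_poissonExt χ.continuous))).mul
    (by fun_prop : Continuous fun p : ℝ × ℝ => (p.2 : ℂ)).stronglyMeasurable
  refine hdom.mono' hmeas.aestronglyMeasurable ?_
  filter_upwards [ae_prod_snd_pos volume] with p hp
  have habs := abs_nonneg p.1
  rw [norm_mul, norm_mul, RCLike.norm_conj, norm_real, Real.norm_of_nonneg hp.le]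
  calc ‖poissonExt φ p.1 p.2‖ * ‖poissonExt χ p.1 p.2‖ * p.2
      ≤ A / (1 + |p.1| + p.2) ^ 3 * (B / (1 + |p.1| + p.2) ^ 3) * (1 + |p.1| + p.2) := by
        gcongr
        exacts [hA _ _ hp.le, hB _ _ hp.le, by linarith]
    _ = A * B * ((1 + |p.1| + p.2) ^ 2 * (1 + |p.1| + p.2) ^ 2 * (1 + |p.1| + p.2))⁻¹ := by
        field_simp
    _ ≤ A * B * ((1 + |p.1|) ^ 2 * (1 + |p.2|) ^ 2 * 1)⁻¹ := by
        rw [abs_of_pos hp]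
        gcongr ?_ * (?_ ^ 2 * ?_ ^ 2 * ?_)⁻¹ <;> linarith
    _ = A * B * (((1 + |p.1|) ^ 2)⁻¹ * ((1 + |p.2|) ^ 2)⁻¹) := by rw [mul_one, mul_inv]

lemma integral_Ioi_mul_poissonSymbol_sq {ξ : ℝ} (hξ : ξ ≠ 0) :
    ∫ y in Ioi (0 : ℝ), y * poissonSymbol y ξ ^ 2 = 1 := by
  have hpos : 0 < 4 * π * |ξ| := by positivity
  have hGamma := Real.integral_rpow_mul_exp_neg_mul_Ioi (zero_lt_two' ℝ) hpos
  calc ∫ y in Ioi (0 : ℝ), y * poissonSymbol y ξ ^ 2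
      = ∫ y in Ioi (0 : ℝ),
          (4 * π * |ξ|) ^ 2 * (y ^ ((2 : ℝ) - 1) * Real.exp (-(4 * π * |ξ| * y))) := by
        congr 1 with y
        rw [poissonSymbol, mul_pow, ← Real.exp_nat_mul]
        norm_num
        ring_nf
    _ = 1 := by
        rw [integral_const_mul, hGamma, Real.rpow_two, Real.Gamma_two]
        field_simp

lemma integrableOn_mul_poissonSymbol_sq {ξ : ℝ} (hξ : ξ ≠ 0) :
    IntegrableOn (fun y => y * poissonSymbol y ξ ^ 2) (Ioi 0) :=
  .of_integral_ne_zero (by rw [integral_Ioi_mul_poissonSymbol_sq hξ]; exact one_ne_zero)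

lemma ae_ne_zero : ∀ᵐ ξ : ℝ, ξ ≠ 0 := Measure.ae_ne volume 0

lemma integrable_mul_poissonSymbol_sq_mul {w : ℝ → ℂ} (hw : Integrable w) :
    Integrable (fun p : ℝ × ℝ => ((p.1 * poissonSymbol p.1 p.2 ^ 2 : ℝ) : ℂ) * w p.2)
      ((volume.restrict (Ioi 0)).prod volume) := by
  have hmeas : AEStronglyMeasurable
      (fun p : ℝ × ℝ => ((p.1 * poissonSymbol p.1 p.2 ^ 2 : ℝ) : ℂ) * w p.2)
      ((volume.restrict (Ioi 0)).prod volume) :=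
    (Continuous.aestronglyMeasurable (by unfold poissonSymbol; fun_prop)).mul
      hw.aestronglyMeasurable.comp_snd
  refine (integrable_prod_iff' hmeas).2 ⟨?_, ?_⟩
  · filter_upwards [ae_ne_zero] with ξ hξ
    exact (integrableOn_mul_poissonSymbol_sq hξ).ofReal.mul_const _
  · refine hw.norm.congr ?_
    filter_upwards [ae_ne_zero] with ξ hξ
    calc ‖w ξ‖ = (∫ y in Ioi (0 : ℝ), y * poissonSymbol y ξ ^ 2) * ‖w ξ‖ := by
          rw [integral_Ioi_mul_poissonSymbol_sq hξ, one_mul]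
      _ = ∫ y in Ioi (0 : ℝ), ‖((y * poissonSymbol y ξ ^ 2 : ℝ) : ℂ) * w ξ‖ := by
          rw [← integral_mul_const]
          refine setIntegral_congr_fun measurableSet_Ioi fun y (hy : 0 < y) => ?_
          rw [norm_mul, norm_real, Real.norm_of_nonneg (by positivity)]

lemma integral_Ioi_integral_mul_poissonSymbol_sq_mul {w : ℝ → ℂ} (hw : Integrable w) :
    ∫ y in Ioi (0 : ℝ), ∫ ξ, ((y * poissonSymbol y ξ ^ 2 : ℝ) : ℂ) * w ξ = ∫ ξ, w ξ := by
  rw [integral_integral_swap (integrable_mul_poissonSymbol_sq_mul hw)]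
  refine integral_congr_ae ?_
  filter_upwards [ae_ne_zero] with ξ hξ
  rw [integral_mul_const, integral_complex_ofReal, integral_Ioi_mul_poissonSymbol_sq hξ,
    ofReal_one, one_mul]

lemma integral_poissonExt_mul_conj_of_nonneg (φ χ : 𝓢(ℝ, ℂ)) (h0 : ⇑φ =ᶠ[𝓝 0] 0) {y : ℝ}
    (hy : 0 ≤ y) :
    ∫ x, poissonExt φ x y * conj (poissonExt χ x y) * y =
      ∫ ξ, ((y * poissonSymbol y ξ ^ 2 : ℝ) : ℂ) * (φ ξ * conj (χ ξ)) := by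
  let f (φ : ℝ → ℂ) (ξ : ℝ) : ℂ := poissonSymbol y ξ * φ ξ
  have hff : Integrable (𝓕 (f φ)) := by
    simpa only [poissonExt_eq_fourier, neg_neg] using (integrable_poissonExt φ h0 hy).comp_neg
  have hcont : Continuous (f φ) := by
    unfold f poissonSymbol
    fun_prop
  simp only [poissonExt_eq_fourier]
  rw [integral_mul_const, integral_neg_eq_self (fun x => 𝓕 (f φ) x * conj (𝓕 (f χ) x)),
    integral_fourier_mul_conj_fourier hcont (integrable_poissonSymbol_mul φ hy)
      (integrable_poissonSymbol_mul χ hy) hff, ← integral_mul_const]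
  congr 1 with ξ
  simp only [f, map_mul, conj_ofReal]
  push_cast
  ring

/-- The weight `y` makes the Poisson symbol disappear: `∫₀^∞ y (4π|ξ|)² e^{-4π|ξ|y} dy = 1`. -/
lemma integral_halfPlane_poissonExt_mul_conj (φ χ : 𝓢(ℝ, ℂ)) (hφ : ⇑φ =ᶠ[𝓝 0] 0)
    (hχ : ⇑χ =ᶠ[𝓝 0] 0) :
    ∫ p : ℝ × ℝ, poissonExt φ p.1 p.2 * conj (poissonExt χ p.1 p.2) * p.2
        ∂(volume.prod (volume.restrict (Ioi 0))) = ∫ ξ, φ ξ * conj (χ ξ) := by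
  have hw : Integrable fun ξ => φ ξ * conj (χ ξ) :=
    (φ.memLp 2).integrable_mul (χ.memLp 2).star
  rw [integral_prod_symm _ (integrable_poissonExt_mul_conj φ χ hφ hχ),
    ← integral_Ioi_integral_mul_poissonSymbol_sq_mul hw]
  exact setIntegral_congr_fun measurableSet_Ioi fun y hy =>
    integral_poissonExt_mul_conj_of_nonneg φ χ hφ (le_of_lt hy)

/-! ### The functions `F_I` -/

lemma fourier_comp_sub_div (f : ℝ → ℂ) (c : ℝ) {l : ℝ} (hl : 0 < l) (ξ : ℝ) :
    𝓕 (fun x => f ((x - c) / l)) ξ = l * cexp (-(2 * π * I * c * ξ)) * 𝓕 f (l * ξ) := by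
  let g (u : ℝ) : ℂ :=
    cexp (-(2 * π * I * c * ξ)) * (cexp (↑(-2 * π * inner ℝ u (l * ξ)) * I) • f u)
  have hphase : ∀ x : ℝ, cexp (↑(-2 * π * inner ℝ x ξ) * I) • f ((x - c) / l)
      = g ((x - c) / l) := fun x => by
    have hlc : (l : ℂ) ≠ 0 := mod_cast hl.ne'
    simp only [g, smul_eq_mul, ← mul_assoc, ← Complex.exp_add]
    congr 2
    simp only [RCLike.inner_apply, conj_trivial]
    push_cast
    field_simp
    ring
  rw [Real.fourier_eq', Real.fourier_eq']
  simp only [hphase]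
  rw [integral_sub_right_eq_self (fun v => g (v / l)) c, Measure.integral_comp_div, abs_of_pos hl,
    integral_const_mul, real_smul, mul_assoc (l : ℂ)]

lemma len_pos (j : ℤ) : 0 < len j := zpow_pos two_pos _

lemma ctr_eq (j k : ℤ) : ctr j k = len j * (k + 1 / 2) := rfl

lemma sqrt_len_mul_self (j : ℤ) : ((√(len j) : ℝ) : ℂ) * (√(len j) : ℝ) = len j := by
  rw [← ofReal_mul, Real.mul_self_sqrt (len_pos j).le]

/-- `psiI ψ j k` as a Schwartz function. -/
def schwartzPsiI (ψ : 𝓢(ℝ, ℂ)) (j k : ℤ) : 𝓢(ℝ, ℂ) :=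
  (((√(len j))⁻¹ : ℝ) : ℂ) • SchwartzMap.compSubConstCLM ℂ (ctr j k)
    (SchwartzMap.compCLMOfContinuousLinearEquiv ℂ
      (ContinuousLinearEquiv.unitsEquivAut ℝ (Units.mk0 (len j)⁻¹ (inv_pos.2 (len_pos j)).ne')) ψ)

lemma coe_schwartzPsiI (ψ : 𝓢(ℝ, ℂ)) (j k : ℤ) : ⇑(schwartzPsiI ψ j k) = psiI ψ j k := by
  ext x
  simp [schwartzPsiI, psiI, div_eq_mul_inv]

lemma coe_fourier_schwartzPsiI (ψ : 𝓢(ℝ, ℂ)) (j k : ℤ) :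
    ⇑(𝓕 (schwartzPsiI ψ j k) : 𝓢(ℝ, ℂ)) = 𝓕 (psiI ψ j k) := by
  rw [SchwartzMap.fourier_coe, coe_schwartzPsiI]

lemma fourier_psiI (ψ : 𝓢(ℝ, ℂ)) (j k : ℤ) (ξ : ℝ) :
    𝓕 (psiI ψ j k) ξ =
      (√(len j) : ℝ) * cexp (-(2 * π * I * ctr j k * ξ)) * 𝓕 ⇑ψ (len j * ξ) := by
  have hsqrt : ((√(len j) : ℝ) : ℂ) ≠ 0 := mod_cast (Real.sqrt_pos.2 (len_pos j)).ne'
  have hfourier : 𝓕 (psiI ψ j k) =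
      (((√(len j))⁻¹ : ℝ) : ℂ) • 𝓕 (fun x => ψ ((x - ctr j k) / len j)) :=
    VectorFourier.fourierIntegral_const_smul 𝐞 volume (innerₗ ℝ) _ _
  rw [hfourier, Pi.smul_apply, fourier_comp_sub_div _ _ (len_pos j), ← sqrt_len_mul_self,
    smul_eq_mul, ofReal_inv]
  field_simp

lemma fourier_schwartzPsiI_eventuallyEq_zero {ψ : 𝓢(ℝ, ℂ)} (hψ : 𝓕 ⇑ψ =ᶠ[𝓝 0] 0) (j k : ℤ) :
    ⇑(𝓕 (schwartzPsiI ψ j k) : 𝓢(ℝ, ℂ)) =ᶠ[𝓝 0] 0 := by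
  have hscale : Tendsto (fun ξ => len j * ξ) (𝓝 0) (𝓝 0) := by
    simpa using (continuous_const_mul (len j)).tendsto 0
  filter_upwards [hscale.eventually hψ] with ξ hξ
  rw [coe_fourier_schwartzPsiI, fourier_psiI, hξ, Pi.zero_apply, Pi.zero_apply, mul_zero]

lemma FI_eq_sqrt_mul_poissonExt (ψ : 𝓢(ℝ, ℂ)) (j k : ℤ) (x y : ℝ) :
    FI ψ j k x y = (√(len j) : ℝ) * poissonExt (𝓕 (psiI ψ j k)) x y := by
  rw [FI, poissonExt, ← integral_const_mul]
  congr 1 with ξ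
  rw [poissonSymbol]
  push_cast
  ring

lemma poissonSymbol_div_mul {l : ℝ} (hl : 0 < l) (y ξ : ℝ) :
    poissonSymbol (y / l) (l * ξ) = l * poissonSymbol y ξ := by
  have hexp : 2 * π * (l * |ξ|) * (y / l) = 2 * π * |ξ| * y := by field_simp
  rw [poissonSymbol, poissonSymbol, abs_mul, abs_of_pos hl, hexp]
  ring

lemma FI_eq_inv_mul_poissonExt (ψ : 𝓢(ℝ, ℂ)) (j k : ℤ) (x y : ℝ) :
    FI ψ j k x y =
      (len j : ℂ)⁻¹ * poissonExt (𝓕 ⇑ψ) ((x - ctr j k) / len j) (y / len j) := by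
  have hl := len_pos j
  have hlc : (len j : ℂ) ≠ 0 := mod_cast hl.ne'
  let g (η : ℝ) : ℂ := poissonSymbol (y / len j) η * 𝓕 ⇑ψ η *
    cexp (2 * π * I * ((x - ctr j k) / len j : ℝ) * η)
  have hscale : poissonExt (𝓕 ⇑ψ) ((x - ctr j k) / len j) (y / len j) =
      len j * ∫ ξ, g (len j * ξ) := by
    rw [Measure.integral_comp_mul_left, abs_of_pos (inv_pos.2 hl), real_smul, ofReal_inv,
      mul_inv_cancel_left₀ hlc, poissonExt]
  rw [hscale, inv_mul_cancel_left₀ hlc, FI_eq_sqrt_mul_poissonExt, poissonExt,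
    ← integral_const_mul]
  congr 1 with ξ
  have hphase : cexp (2 * π * I * ((x - ctr j k) / len j : ℝ) * (len j * ξ : ℝ)) =
      cexp (-(2 * π * I * ctr j k * ξ)) * cexp (2 * π * I * x * ξ) := by
    rw [← Complex.exp_add]
    congr 1
    push_cast
    field_simp
    ring
  simp only [g]
  rw [fourier_psiI, poissonSymbol_div_mul hl, hphase, ofReal_mul,
    ← sqrt_len_mul_self]
  ring

/-- The pointwise decay `|F_I(x+iy)| ≤ C |I|³ / (|I| + |x - C_I| + y)⁴`, uniform in `I`. -/
def FIDecay (ψ : 𝓢(ℝ, ℂ)) (C : ℝ) : Prop :=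
  ∀ (j k : ℤ) (x y : ℝ), 0 ≤ y →
    ‖FI ψ j k x y‖ ≤ C * (len j ^ 3 / (len j + |x - ctr j k| + y) ^ 4)

lemma exists_FIDecay {ψ : 𝓢(ℝ, ℂ)} (hψ : 𝓕 ⇑ψ =ᶠ[𝓝 0] 0) : ∃ C, 0 ≤ C ∧ FIDecay ψ C := by
  obtain ⟨C, hC0, hC⟩ := exists_norm_poissonExt_le 4 (𝓕 ψ) (by rwa [SchwartzMap.fourier_coe])
  rw [SchwartzMap.fourier_coe] at hC
  refine ⟨C, hC0, fun j k x y hy => ?_⟩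
  have hl := len_pos j
  have hbase : 1 + |(x - ctr j k) / len j| + y / len j = (len j + |x - ctr j k| + y) / len j := by
    rw [abs_div, abs_of_pos hl]
    field_simp
  rw [FI_eq_inv_mul_poissonExt, norm_mul, norm_inv, norm_real, Real.norm_of_nonneg hl.le]
  calc (len j)⁻¹ * ‖poissonExt (𝓕 ⇑ψ) ((x - ctr j k) / len j) (y / len j)‖
      ≤ (len j)⁻¹ * (C / (1 + |(x - ctr j k) / len j| + y / len j) ^ 4) := by
        gcongr
        exact hC _ _ (by positivity)
    _ = C * (len j ^ 3 / (len j + |x - ctr j k| + y) ^ 4) := by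
        rw [hbase]
        field_simp

lemma stronglyMeasurable_FI (ψ : 𝓢(ℝ, ℂ)) (j k : ℤ) :
    StronglyMeasurable fun p : ℝ × ℝ => FI ψ j k p.1 p.2 := by
  simp only [FI_eq_sqrt_mul_poissonExt]
  rw [← coe_fourier_schwartzPsiI]
  exact (stronglyMeasurable_poissonExt (SchwartzMap.continuous _)).const_mul _

lemma ctr_add_two_pow_mul (j : ℕ) (k m : ℤ) : ctr j (k + 2 ^ j * m) = m + ctr j k := by
  simp only [ctr, zpow_neg, zpow_natCast]
  push_cast
  field_simp
  ring

lemma FI_sub_intCast (ψ : 𝓢(ℝ, ℂ)) (j : ℕ) (k m : ℤ) (x y : ℝ) :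
    FI ψ j k (x - m) y = FI ψ j (k + 2 ^ j * m) x y := by
  rw [FI_eq_inv_mul_poissonExt, FI_eq_inv_mul_poissonExt, ctr_add_two_pow_mul, sub_sub]

lemma FI_mul_conj_mul (ψ : 𝓢(ℝ, ℂ)) (j k j' k' : ℤ) (p : ℝ × ℝ) :
    FI ψ j k p.1 p.2 * conj (FI ψ j' k' p.1 p.2) * p.2 =
      (√(len j) * √(len j') : ℝ) *
        (poissonExt (𝓕 (schwartzPsiI ψ j k) : 𝓢(ℝ, ℂ)) p.1 p.2 *
          conj (poissonExt (𝓕 (schwartzPsiI ψ j' k') : 𝓢(ℝ, ℂ)) p.1 p.2) * p.2) := by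
  simp only [FI_eq_sqrt_mul_poissonExt, coe_fourier_schwartzPsiI, map_mul, conj_ofReal, ofReal_mul]
  ring

lemma integrable_FI_mul_conj {ψ : 𝓢(ℝ, ℂ)} (hψ : 𝓕 ⇑ψ =ᶠ[𝓝 0] 0) (j k j' k' : ℤ) :
    Integrable (fun p : ℝ × ℝ => FI ψ j k p.1 p.2 * conj (FI ψ j' k' p.1 p.2) * p.2)
      (volume.prod (volume.restrict (Ioi 0))) := by
  simp only [FI_mul_conj_mul]
  exact (integrable_poissonExt_mul_conj _ _ (fourier_schwartzPsiI_eventuallyEq_zero hψ j k)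
    (fourier_schwartzPsiI_eventuallyEq_zero hψ j' k')).const_mul _

lemma integral_halfPlane_FI_mul_conj {ψ : 𝓢(ℝ, ℂ)} (hψ : 𝓕 ⇑ψ =ᶠ[𝓝 0] 0) (j k j' k' : ℤ) :
    ∫ p : ℝ × ℝ, FI ψ j k p.1 p.2 * conj (FI ψ j' k' p.1 p.2) * p.2
        ∂(volume.prod (volume.restrict (Ioi 0))) =
      (√(len j) * √(len j') : ℝ) * ∫ x, psiI ψ j k x * conj (psiI ψ j' k' x) := by
  simp only [FI_mul_conj_mul, ← coe_schwartzPsiI]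
  rw [integral_const_mul, integral_halfPlane_poissonExt_mul_conj _ _
    (fourier_schwartzPsiI_eventuallyEq_zero hψ j k)
    (fourier_schwartzPsiI_eventuallyEq_zero hψ j' k')]
  simp only [SchwartzMap.fourier_coe]
  rw [integral_fourier_mul_conj_fourier (SchwartzMap.continuous _) (SchwartzMap.integrable _)
    (SchwartzMap.integrable _)]
  rw [← SchwartzMap.fourier_coe]
  exact SchwartzMap.integrable _

/-! ### Majorants of the functions `G_I` -/

lemma summable_int_inv_one_add_abs_sq : Summable fun n : ℤ => ((1 + |(n : ℝ)|) ^ 2)⁻¹ := by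
  have hnat : Summable fun n : ℕ => ((1 + (n : ℝ)) ^ 2)⁻¹ := by
    simpa only [Nat.cast_add, Nat.cast_one, add_comm] using
      (summable_nat_add_iff 1).2 (Real.summable_nat_pow_inv.2 one_lt_two)
  exact .of_nat_of_neg (by simpa using hnat) (by simpa using hnat)

lemma exists_tsum_int_inv_sq_le :
    ∃ M : ℝ, 0 ≤ M ∧ ∀ v : ℝ,
      ∑' k : ℤ, ENNReal.ofReal ((1 + |v - k|) ^ 2)⁻¹ ≤ ENNReal.ofReal M := by
  refine ⟨∑' n : ℤ, 4 * ((1 + |(n : ℝ)|) ^ 2)⁻¹, tsum_nonneg fun n => by positivity, fun v => ?_⟩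
  rw [← (Equiv.addRight ⌊v⌋).tsum_eq, ENNReal.ofReal_tsum_of_nonneg (fun n => by positivity)
    (summable_int_inv_one_add_abs_sq.mul_left 4)]
  refine ENNReal.tsum_le_tsum fun n => ENNReal.ofReal_le_ofReal ?_
  have hn : (1 + |(n : ℝ)|) / 2 ≤ 1 + |v - (n + ⌊v⌋ : ℤ)| := by
    have htri : |(n : ℝ)| ≤ |Int.fract v| + |v - (n + ⌊v⌋ : ℤ)| := by
      refine (abs_sub _ _).trans_eq' ?_
      push_cast
      rw [Int.fract, sub_sub_sub_cancel_left, add_sub_cancel_right]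
    rw [Int.abs_fract] at htri
    linarith [Int.fract_lt_one v, abs_nonneg (v - (n + ⌊v⌋ : ℤ))]
  calc ((1 + |v - (n + ⌊v⌋ : ℤ)|) ^ 2)⁻¹ ≤ (((1 + |(n : ℝ)|) / 2) ^ 2)⁻¹ := by gcongr
    _ = 4 * ((1 + |(n : ℝ)|) ^ 2)⁻¹ := by field_simp; norm_num

lemma FIDecay.norm_FI_le {ψ : 𝓢(ℝ, ℂ)} {C : ℝ} (h : FIDecay ψ C) (hC : 0 ≤ C) {j k : ℤ}
    {x y R : ℝ} (hy : 0 ≤ y) (hR : 0 ≤ R) (hd : R ≤ 2 * (len j + |x - ctr j k| + y)) :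
    ‖FI ψ j k x y‖ ≤
      9 * C * (len j / (len j + R) ^ 2) * ((1 + |x / len j - 1 / 2 - k|) ^ 2)⁻¹ := by
  have hl := len_pos j
  have hctr : |x - ctr j k| = len j * |x / len j - 1 / 2 - k| := by
    rw [← abs_of_pos hl, ← abs_mul, abs_of_pos hl]
    congr 1
    rw [ctr_eq]
    field_simp
    ring
  rw [hctr] at hd
  set d := |x / len j - 1 / 2 - k|
  have hd0 : 0 ≤ d := abs_nonneg _
  have hld0 : 0 ≤ len j * d := by positivity
  calc ‖FI ψ j k x y‖
      ≤ C * (len j ^ 3 / (len j + len j * d + y) ^ 4) := hctr ▸ h j k x y hy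
    _ = C * (len j / (len j + len j * d + y) ^ 2) *
          (len j ^ 2 / (len j + len j * d + y) ^ 2) := by field_simp
    _ ≤ C * (len j / ((len j + R) / 3) ^ 2) * (len j ^ 2 / (len j * (1 + d)) ^ 2) := by
        gcongr <;> linarith
    _ = 9 * C * (len j / (len j + R) ^ 2) * ((1 + d) ^ 2)⁻¹ := by field_simp; norm_num

lemma exists_tsum_enorm_FI_le {ψ : 𝓢(ℝ, ℂ)} (hψ : 𝓕 ⇑ψ =ᶠ[𝓝 0] 0) :
    ∃ C : ℝ, 0 ≤ C ∧ ∀ {ι : Type} (j : ℤ) (e : ι → ℤ) (x y R : ℝ), e.Injective → 0 ≤ y → 0 ≤ R →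
      (∀ i, R ≤ 2 * (len j + |x - ctr j (e i)| + y)) →
        ∑' i, ‖FI ψ j (e i) x y‖ₑ ≤ ENNReal.ofReal (C * (len j / (len j + R) ^ 2)) := by
  obtain ⟨C, hC0, hC⟩ := exists_FIDecay hψ
  obtain ⟨M, hM0, hM⟩ := exists_tsum_int_inv_sq_le
  refine ⟨9 * C * M, by positivity, fun {ι} j e x y R he hy hR hd => ?_⟩
  have hl := len_pos j
  let v := x / len j - 1 / 2
  calc ∑' i, ‖FI ψ j (e i) x y‖ₑ
      ≤ ∑' i, ENNReal.ofReal (9 * C * (len j / (len j + R) ^ 2)) *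
          ENNReal.ofReal ((1 + |v - e i|) ^ 2)⁻¹ := by
        refine ENNReal.tsum_le_tsum fun i => ?_
        rw [← ENNReal.ofReal_mul (by positivity), ← ofReal_norm]
        exact ENNReal.ofReal_le_ofReal (hC.norm_FI_le hC0 hy hR (hd i))
    _ ≤ ENNReal.ofReal (9 * C * (len j / (len j + R) ^ 2)) * ENNReal.ofReal M := by
        rw [ENNReal.tsum_mul_left]
        gcongr
        exact (ENNReal.tsum_comp_le_tsum_of_injective he
          fun k : ℤ => ENNReal.ofReal ((1 + |v - k|) ^ 2)⁻¹).trans (hM v)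
    _ = ENNReal.ofReal (9 * C * M * (len j / (len j + R) ^ 2)) := by
        rw [← ENNReal.ofReal_mul (by positivity)]
        congr 1
        ring

lemma len_succ (j : ℕ) : len (j + 1 : ℕ) = len j / 2 := by
  simp only [len, zpow_neg, zpow_natCast, pow_succ]
  field_simp

lemma tsum_len_div_sq_le (j : ℕ) {R : ℝ} (hR : 0 < R) :
    ∑' i : ℕ, ENNReal.ofReal (len (i + j : ℕ) / (len (i + j : ℕ) + R) ^ 2) ≤
      ENNReal.ofReal (2 * (len j / (R * (len j + R)))) := by
  let f (i : ℕ) : ℝ := 2 * (len (i + j : ℕ) / (R * (len (i + j : ℕ) + R)))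
  have hf : ∀ i, 0 ≤ f i := fun i => by have := len_pos (i + j : ℕ); positivity
  have hstep : ∀ i : ℕ, len (i + j : ℕ) / (len (i + j : ℕ) + R) ^ 2 ≤ f i - f (i + 1) := fun i => by
    simp only [f, add_right_comm i 1 j, len_succ]
    have hl := len_pos (i + j : ℕ)
    set l := len (i + j : ℕ)
    calc l / (l + R) ^ 2 = 2 * l / ((l + R) * (2 * l + 2 * R)) := by field_simp
      _ ≤ 2 * l / ((l + R) * (l + 2 * R)) := by gcongr; linarith
      _ = 2 * (l / (R * (l + R))) - 2 * (l / 2 / (R * (l / 2 + R))) := by field_simp; ring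
  refine ENNReal.tsum_le_of_sum_range_le fun n => ?_
  rw [← ENNReal.ofReal_sum_of_nonneg fun i _ => by have := len_pos (i + j : ℕ); positivity]
  refine ENNReal.ofReal_le_ofReal ((Finset.sum_le_sum fun i _ => hstep i).trans ?_)
  rw [Finset.sum_range_sub']
  simpa [f] using hf n

/-- The sum of the absolute values of the terms of the series defining `GI`. -/
def GIMajorant (ψ : 𝓢(ℝ, ℂ)) (p : ℕ × ℕ) (z : ℝ × ℝ) : ℝ≥0∞ :=
  ∑' m : ℤ, ‖FI ψ p.1 p.2 (z.1 - m) z.2‖ₑ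

/-- The pointwise majorant of `∑ |G_I|` over a family of dyadic intervals `I`. -/
def familyMajorant (ψ : 𝓢(ℝ, ℂ)) (A : Set (ℕ × ℕ)) (z : ℝ × ℝ) : ℝ≥0∞ :=
  ∑' p : A, GIMajorant ψ p z

lemma enorm_GI_le (ψ : 𝓢(ℝ, ℂ)) (p : ℕ × ℕ) (z : ℝ × ℝ) :
    ‖GI ψ p.1 p.2 z.1 z.2‖ₑ ≤ GIMajorant ψ p z :=
  enorm_tsum_le_tsum_enorm

lemma measurable_FI_sub_intCast (ψ : 𝓢(ℝ, ℂ)) (j k m : ℤ) :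
    Measurable fun z : ℝ × ℝ => FI ψ j k (z.1 - m) z.2 :=
  (stronglyMeasurable_FI ψ j k).measurable.comp
    (by fun_prop : Measurable fun z : ℝ × ℝ => (z.1 - (m : ℝ), z.2))

lemma measurable_GI (ψ : 𝓢(ℝ, ℂ)) (j k : ℤ) :
    Measurable fun z : ℝ × ℝ => GI ψ j k z.1 z.2 :=
  .tsum fun m => measurable_FI_sub_intCast ψ j k m

@[fun_prop]
lemma measurable_GIMajorant (ψ : 𝓢(ℝ, ℂ)) (p : ℕ × ℕ) : Measurable (GIMajorant ψ p) :=
  .tsum fun m => (measurable_FI_sub_intCast ψ p.1 p.2 m).enorm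

lemma add_two_pow_mul_injective (j : ℕ) (k : ℤ) :
    Function.Injective fun m : ℤ => k + 2 ^ j * m :=
  (add_right_injective k).comp (mul_right_injective₀ (by positivity))

lemma eq_and_eq_of_add_two_pow_mul_eq {j k k' : ℕ} {m m' : ℤ} (hk : k < 2 ^ j) (hk' : k' < 2 ^ j)
    (h : (k : ℤ) + 2 ^ j * m = k' + 2 ^ j * m') : k = k' ∧ m = m' := by
  have hmod : ∀ {k : ℕ} {m : ℤ}, k < 2 ^ j → ((k : ℤ) + 2 ^ j * m) % 2 ^ j = k := fun {k m} hk => by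
    rw [Int.add_mul_emod_self_left, Int.emod_eq_of_lt (by positivity) (mod_cast hk)]
  obtain rfl : k = k' := by
    have := hmod (m := m) hk
    rw [h, hmod hk'] at this
    exact_mod_cast this.symm
  exact ⟨rfl, add_two_pow_mul_injective j k h⟩

lemma exists_GIMajorant_le {ψ : 𝓢(ℝ, ℂ)} (hψ : 𝓕 ⇑ψ =ᶠ[𝓝 0] 0) :
    ∃ C : ℝ, 0 ≤ C ∧ ∀ (p : ℕ × ℕ) (z : ℝ × ℝ), 0 ≤ z.2 →
      GIMajorant ψ p z ≤ ENNReal.ofReal (C * (len p.1 / (len p.1 + z.2) ^ 2)) := by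
  obtain ⟨C, hC0, hC⟩ := exists_tsum_enorm_FI_le hψ
  refine ⟨C, hC0, fun p z hz => ?_⟩
  simp only [GIMajorant, FI_sub_intCast]
  refine hC p.1 _ z.1 z.2 z.2 (add_two_pow_mul_injective p.1 p.2) hz hz fun m => ?_
  linarith [len_pos p.1, abs_nonneg (z.1 - ctr p.1 (p.2 + 2 ^ p.1 * m))]

/-- The decay of `familyMajorant`: if the intervals of `A ⊆ {I ⊆ [0,1)}` have length at most `2⁻ʲ`
and all their integer translates are essentially at distance `R` from the point `z`, then
`familyMajorant ψ A z ≤ C 2⁻ʲ / (R (2⁻ʲ + R))`. -/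
def FamilyDecay (ψ : 𝓢(ℝ, ℂ)) (C : ℝ) : Prop :=
  ∀ (A : Set (ℕ × ℕ)) (z : ℝ × ℝ) (j : ℕ) (R : ℝ), 0 ≤ z.2 → 0 < R →
    (∀ p ∈ A, p.2 < 2 ^ p.1 ∧ j ≤ p.1 ∧
      ∀ m : ℤ, R ≤ 2 * (len p.1 + |z.1 - m - ctr p.1 p.2| + z.2)) →
    familyMajorant ψ A z ≤ ENNReal.ofReal (C * (len j / (R * (len j + R))))

lemma familyMajorant_eq_tsum_tsum (ψ : 𝓢(ℝ, ℂ)) (A : Set (ℕ × ℕ)) (z : ℝ × ℝ) :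
    familyMajorant ψ A z = ∑' j : ℕ, ∑' k : {k | (j, k) ∈ A}, GIMajorant ψ (j, k) z := by
  rw [familyMajorant, tsum_subtype A fun p => GIMajorant ψ p z, ENNReal.tsum_prod']
  refine tsum_congr fun j => ?_
  rw [tsum_subtype {k | (j, k) ∈ A} fun k => GIMajorant ψ (j, k) z]
  rfl

lemma exists_familyDecay {ψ : 𝓢(ℝ, ℂ)} (hψ : 𝓕 ⇑ψ =ᶠ[𝓝 0] 0) :
    ∃ C : ℝ, 0 ≤ C ∧ FamilyDecay ψ C := by
  obtain ⟨C, hC0, hC⟩ := exists_tsum_enorm_FI_le hψ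
  refine ⟨C * 2, by positivity, fun A z j R hz hR hA => ?_⟩
  have hlevel (i : ℕ) : ∑' k : {k | (i, k) ∈ A}, GIMajorant ψ (i, k) z ≤
      ENNReal.ofReal (C * (len i / (len i + R) ^ 2)) := by
    let e (q : {k | (i, k) ∈ A} × ℤ) : ℤ := (q.1 : ℕ) + 2 ^ i * q.2
    have he : e.Injective := fun q r h =>
      have hqr := eq_and_eq_of_add_two_pow_mul_eq (hA _ q.1.2).1 (hA _ r.1.2).1 h
      Prod.ext (Subtype.ext hqr.1) hqr.2
    have hsum := hC i e z.1 z.2 R he hz hR.le fun q => by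
      simpa only [e, ctr_add_two_pow_mul, ← sub_sub] using (hA _ q.1.2).2.2 q.2
    rw [ENNReal.tsum_prod'] at hsum
    simpa only [GIMajorant, FI_sub_intCast] using hsum
  have hempty (i : ℕ) (hi : i ∈ Finset.range j) :
      ∑' k : {k | (i, k) ∈ A}, GIMajorant ψ (i, k) z = 0 := by
    have : IsEmpty {k | (i, k) ∈ A} :=
      ⟨fun k => (Finset.mem_range.1 hi).not_ge (hA _ k.2).2.1⟩
    exact tsum_empty
  rw [familyMajorant_eq_tsum_tsum, ← ENNReal.summable.sum_add_tsum_nat_add' (k := j),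
    Finset.sum_eq_zero hempty, zero_add]
  calc ∑' i : ℕ, ∑' k : {k | (i + j, k) ∈ A}, GIMajorant ψ (i + j, k) z
      ≤ ∑' i : ℕ, ENNReal.ofReal C *
          ENNReal.ofReal (len (i + j : ℕ) / (len (i + j : ℕ) + R) ^ 2) :=
        ENNReal.tsum_le_tsum fun i => (hlevel (i + j)).trans_eq (ENNReal.ofReal_mul hC0)
    _ ≤ ENNReal.ofReal C * ENNReal.ofReal (2 * (len j / (R * (len j + R)))) := by
        rw [ENNReal.tsum_mul_left]
        gcongr
        exact tsum_len_div_sq_le j hR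
    _ = ENNReal.ofReal (C * 2 * (len j / (R * (len j + R)))) := by
        rw [← ENNReal.ofReal_mul hC0, mul_assoc]

/-! ### Orthogonality in the strip -/

/-- The measure `dx dy` on the half-strip `[0,1) × (0,∞)`. -/
def stripMeasure : Measure (ℝ × ℝ) :=
  (volume.restrict (Ico 0 1)).prod (volume.restrict (Ioi 0))

lemma stripMeasure_eq_restrict : stripMeasure = volume.restrict (Ico 0 1 ×ˢ Ioi 0) :=
  Measure.prod_restrict _ _

lemma ae_stripMeasure_mem : ∀ᵐ z ∂stripMeasure, z.1 ∈ Ico (0 : ℝ) 1 ∧ 0 < z.2 := by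
  rw [stripMeasure_eq_restrict]
  exact ae_restrict_mem (measurableSet_Ico.prod measurableSet_Ioi)

lemma hasSum_integral_comp_sub_intCast {Y : Type*} [MeasurableSpace Y] {ν : Measure Y} [SFinite ν]
    {g : ℝ × Y → ℂ} (hg : Integrable g (volume.prod ν)) :
    HasSum (fun m : ℤ => ∫ z, g (z.1 - m, z.2) ∂(volume.restrict (Ico 0 1)).prod ν)
      (∫ z, g z ∂volume.prod ν) := by
  let h (x : ℝ) : ℂ := ∫ y, g (x, y) ∂ν
  have hterm (m : ℤ) : ∫ z, g (z.1 - m, z.2) ∂(volume.restrict (Ico 0 1)).prod ν =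
      ∫ x in (0 + ((-m : ℤ) : ℝ))..(0 + ((-m : ℤ) : ℝ) + 1), h x := by
    have hgm : Integrable (fun z : ℝ × Y => g (z.1 - m, z.2))
        ((volume.restrict (Ico 0 1)).prod ν) :=
      (((measurePreserving_sub_right volume (m : ℝ)).prod
        (MeasurePreserving.id ν)).integrable_comp_of_integrable hg).mono_measure
        (Measure.prod_mono Measure.restrict_le_self le_rfl)
    rw [integral_prod _ hgm, integral_Ico_eq_integral_Ioc,
      ← intervalIntegral.integral_of_le zero_le_one, intervalIntegral.integral_comp_sub_right h]
    congr 1 <;> push_cast <;> ring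
  simp only [hterm]
  rw [integral_prod _ hg]
  exact (Equiv.neg ℤ).hasSum_iff.2 (hg.integral_prod_left.hasSum_intervalIntegral 0)

/-- The product `G_I \overline{G_J}`. -/
def GIProd (ψ : 𝓢(ℝ, ℂ)) (q r : ℕ × ℕ) (z : ℝ × ℝ) : ℂ :=
  GI ψ q.1 q.2 z.1 z.2 * conj (GI ψ r.1 r.2 z.1 z.2)

@[fun_prop]
lemma measurable_GIProd (ψ : 𝓢(ℝ, ℂ)) (q r : ℕ × ℕ) : Measurable (GIProd ψ q r) :=
  (measurable_GI ψ q.1 q.2).mul (continuous_conj.measurable.comp (measurable_GI ψ r.1 r.2))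

lemma enorm_GIProd_le (ψ : 𝓢(ℝ, ℂ)) (q r : ℕ × ℕ) (z : ℝ × ℝ) :
    ‖GIProd ψ q r z‖ₑ ≤ GIMajorant ψ q z * GIMajorant ψ r z := by
  rw [GIProd, enorm_mul, RCLike.enorm_conj]
  gcongr <;> exact enorm_GI_le ..

lemma lintegral_GIMajorant_mul_lt_top {ψ : 𝓢(ℝ, ℂ)} (hψ : 𝓕 ⇑ψ =ᶠ[𝓝 0] 0) (q r : ℕ × ℕ) :
    ∫⁻ z, GIMajorant ψ q z * GIMajorant ψ r z * ENNReal.ofReal z.2 ∂stripMeasure < ⊤ := by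
  obtain ⟨C, hC0, hC⟩ := exists_GIMajorant_le hψ
  have hlq := len_pos q.1
  have hlr := len_pos r.1
  have hint : Integrable (fun z : ℝ × ℝ => 1 * (C ^ 2 / len q.1 * ((1 + |z.2 / len q.1|) ^ 2)⁻¹))
      stripMeasure :=
    (integrable_const (1 : ℝ)).mul_prod
      ((integrable_inv_one_add_abs_sq.comp_div hlq.ne').const_mul _).restrict
  refine (lintegral_mono_ae ?_).trans_lt hint.lintegral_lt_top
  filter_upwards [ae_stripMeasure_mem] with z hz
  have hy := hz.2
  have hr : len r.1 * z.2 / (len r.1 + z.2) ^ 2 ≤ 1 := by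
    rw [div_le_one (by positivity)]
    nlinarith
  calc GIMajorant ψ q z * GIMajorant ψ r z * ENNReal.ofReal z.2
      ≤ ENNReal.ofReal (C * (len q.1 / (len q.1 + z.2) ^ 2)) *
          ENNReal.ofReal (C * (len r.1 / (len r.1 + z.2) ^ 2)) * ENNReal.ofReal z.2 := by
        gcongr
        exacts [hC q z hy.le, hC r z hy.le]
    _ = ENNReal.ofReal (C ^ 2 * len q.1 / (len q.1 + z.2) ^ 2 *
          (len r.1 * z.2 / (len r.1 + z.2) ^ 2)) := by
        rw [← ENNReal.ofReal_mul (by positivity), ← ENNReal.ofReal_mul (by positivity)]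
        congr 1
        field_simp
    _ ≤ ENNReal.ofReal (C ^ 2 * len q.1 / (len q.1 + z.2) ^ 2) :=
        ENNReal.ofReal_le_ofReal (mul_le_of_le_one_right (by positivity) hr)
    _ = ENNReal.ofReal (1 * (C ^ 2 / len q.1 * ((1 + |z.2 / len q.1|) ^ 2)⁻¹)) := by
        rw [abs_of_pos (by positivity)]
        congr 1
        field_simp

lemma integrable_GIProd_mul {ψ : 𝓢(ℝ, ℂ)} (hψ : 𝓕 ⇑ψ =ᶠ[𝓝 0] 0) (q r : ℕ × ℕ) {w : ℝ → ℝ}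
    (hw : Measurable w) {c : ℝ} (hwc : ∀ y, 0 < y → |w y| ≤ c * y) :
    Integrable (fun z => GIProd ψ q r z * w z.2) stripMeasure := by
  refine ⟨by fun_prop, (lintegral_mono_ae ?_).trans_lt
    (lintegral_const_mul' (ENNReal.ofReal c) _ ENNReal.ofReal_ne_top ▸
      ENNReal.mul_lt_top ENNReal.ofReal_lt_top (lintegral_GIMajorant_mul_lt_top hψ q r))⟩
  filter_upwards [ae_stripMeasure_mem] with z hz
  have hwz : ‖(w z.2 : ℂ)‖ₑ ≤ ENNReal.ofReal c * ENNReal.ofReal z.2 := by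
    rw [← ENNReal.ofReal_mul' hz.2.le, ← ofReal_norm, Complex.norm_real]
    exact ENNReal.ofReal_le_ofReal (hwc z.2 hz.2)
  calc ‖GIProd ψ q r z * w z.2‖ₑ
      ≤ GIMajorant ψ q z * GIMajorant ψ r z * (ENNReal.ofReal c * ENNReal.ofReal z.2) := by
        rw [enorm_mul]
        gcongr
        exact enorm_GIProd_le ψ q r z
    _ = ENNReal.ofReal c * (GIMajorant ψ q z * GIMajorant ψ r z * ENNReal.ofReal z.2) := by ring

/-- The `(m, n)` term of the product of the series defining `G_I` and `\overline{G_J}`, weighted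
by the height. -/
def GIProdTerm (ψ : 𝓢(ℝ, ℂ)) (q r : ℕ × ℕ) (mn : ℤ × ℤ) (z : ℝ × ℝ) : ℂ :=
  FI ψ q.1 q.2 (z.1 - mn.1) z.2 * conj (FI ψ r.1 r.2 (z.1 - mn.2) z.2) * z.2

@[fun_prop]
lemma measurable_GIProdTerm (ψ : 𝓢(ℝ, ℂ)) (q r : ℕ × ℕ) (mn : ℤ × ℤ) :
    Measurable (GIProdTerm ψ q r mn) :=
  ((measurable_FI_sub_intCast ψ q.1 q.2 mn.1).mul (continuous_conj.measurable.comp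
    (measurable_FI_sub_intCast ψ r.1 r.2 mn.2))).mul (by fun_prop)

lemma summable_norm_FI_sub_intCast {ψ : 𝓢(ℝ, ℂ)} (hψ : 𝓕 ⇑ψ =ᶠ[𝓝 0] 0) (p : ℕ × ℕ)
    {z : ℝ × ℝ} (hz : 0 ≤ z.2) : Summable fun m : ℤ => ‖FI ψ p.1 p.2 (z.1 - m) z.2‖ := by
  obtain ⟨C, -, hC⟩ := exists_GIMajorant_le hψ
  simpa only [toReal_enorm] using
    ENNReal.summable_toReal (ne_top_of_le_ne_top ENNReal.ofReal_ne_top (hC p z hz))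

lemma GIProd_mul_snd_eq_tsum {ψ : 𝓢(ℝ, ℂ)} (hψ : 𝓕 ⇑ψ =ᶠ[𝓝 0] 0) (q r : ℕ × ℕ)
    {z : ℝ × ℝ} (hz : 0 ≤ z.2) : GIProd ψ q r z * z.2 = ∑' mn, GIProdTerm ψ q r mn z := by
  have hq := summable_norm_FI_sub_intCast hψ q hz
  have hr : Summable fun n : ℤ => ‖conj (FI ψ r.1 r.2 (z.1 - n) z.2)‖ := by
    simpa only [RCLike.norm_conj] using summable_norm_FI_sub_intCast hψ r hz
  simp only [GIProd, GI, GIProdTerm]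
  rw [Complex.conj_tsum, tsum_mul_tsum_of_summable_norm hq hr, tsum_mul_right]

lemma tsum_lintegral_enorm_GIProdTerm_ne_top {ψ : 𝓢(ℝ, ℂ)} (hψ : 𝓕 ⇑ψ =ᶠ[𝓝 0] 0)
    (q r : ℕ × ℕ) : ∑' mn, ∫⁻ z, ‖GIProdTerm ψ q r mn z‖ₑ ∂stripMeasure ≠ ⊤ := by
  rw [← lintegral_tsum fun mn => (measurable_GIProdTerm ψ q r mn).enorm.aemeasurable]
  refine ((lintegral_mono_ae ?_).trans_lt (lintegral_GIMajorant_mul_lt_top hψ q r)).ne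
  filter_upwards [ae_stripMeasure_mem] with z hz
  have hy : ‖(z.2 : ℂ)‖ₑ = ENNReal.ofReal z.2 := by
    rw [← ofReal_norm, Complex.norm_real, Real.norm_of_nonneg hz.2.le]
  simp only [GIProdTerm, GIMajorant, enorm_mul, RCLike.enorm_conj, hy, ENNReal.tsum_mul_right]
  rw [ENNReal.tsum_prod']
  simp only [ENNReal.tsum_mul_left, ENNReal.tsum_mul_right, le_refl]

lemma hasSum_integral_GIProdTerm_add {ψ : 𝓢(ℝ, ℂ)} (hψ : 𝓕 ⇑ψ =ᶠ[𝓝 0] 0) (q r : ℕ × ℕ)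
    (d : ℤ) :
    HasSum (fun m : ℤ => ∫ z, GIProdTerm ψ q r (m, m + d) z ∂stripMeasure)
      ((√(len q.1) * √(len r.1) : ℝ) *
        ∫ x, psiI ψ q.1 q.2 x * conj (psiI ψ r.1 (r.2 + 2 ^ r.1 * d) x)) := by
  rw [← integral_halfPlane_FI_mul_conj hψ]
  simpa only [GIProdTerm, Int.cast_add, ← sub_sub, ← FI_sub_intCast] using!
    hasSum_integral_comp_sub_intCast
      (integrable_FI_mul_conj hψ q.1 q.2 r.1 (r.2 + 2 ^ r.1 * d))

lemma integral_GIProd_mul_snd_eq_zero {ψ : 𝓢(ℝ, ℂ)} (hψ : 𝓕 ⇑ψ =ᶠ[𝓝 0] 0)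
    (horth : Pairwise fun a b : ℤ × ℤ =>
      ∫ x, psiI ψ a.1 a.2 x * conj (psiI ψ b.1 b.2 x) = 0)
    {q r : ℕ × ℕ} (hq : q.2 < 2 ^ q.1) (hr : r.2 < 2 ^ r.1) (hqr : q ≠ r) :
    ∫ z, GIProd ψ q r z * z.2 ∂stripMeasure = 0 := by
  have hfin := tsum_lintegral_enorm_GIProdTerm_ne_top hψ q r
  let e : ℤ × ℤ ≃ ℤ × ℤ :=
    { toFun := fun a => (a.2, a.2 + a.1)
      invFun := fun b => (b.2 - b.1, b.1)
      left_inv := fun a => by simp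
      right_inv := fun b => by simp }
  have hsum : Summable fun mn => ∫ z, GIProdTerm ψ q r mn z ∂stripMeasure := by
    refine .of_norm ?_
    simpa only [toReal_enorm] using ENNReal.summable_toReal (ne_top_of_le_ne_top hfin
      (ENNReal.tsum_le_tsum fun mn => enorm_integral_le_lintegral_enorm (GIProdTerm ψ q r mn)))
  have hshift (d : ℤ) : ((q.1 : ℤ), (q.2 : ℤ)) ≠ ((r.1 : ℤ), r.2 + 2 ^ r.1 * d) := fun h => by
    obtain ⟨hlevel, hshift⟩ := Prod.mk.inj h
    rw [Nat.cast_inj] at hlevel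
    exact hqr (Prod.ext hlevel (eq_and_eq_of_add_two_pow_mul_eq (m := 0) (m' := d)
      (hlevel ▸ hq) hr (by rwa [mul_zero, add_zero])).1)
  calc ∫ z, GIProd ψ q r z * z.2 ∂stripMeasure
      = ∫ z, ∑' mn, GIProdTerm ψ q r mn z ∂stripMeasure := by
        refine integral_congr_ae ?_
        filter_upwards [ae_stripMeasure_mem] with z hz
        exact GIProd_mul_snd_eq_tsum hψ q r hz.2.le
    _ = ∑' mn, ∫ z, GIProdTerm ψ q r mn z ∂stripMeasure :=
        integral_tsum (fun mn => (measurable_GIProdTerm ψ q r mn).aestronglyMeasurable) hfin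
    _ = ∑' (d : ℤ) (m : ℤ), ∫ z, GIProdTerm ψ q r (m, m + d) z ∂stripMeasure := by
        rw [← e.tsum_eq]
        exact (e.summable_iff.2 hsum).tsum_prod
    _ = 0 := by
        simp only [(hasSum_integral_GIProdTerm_add hψ q r _).tsum_eq, horth (hshift _), mul_zero,
          tsum_zero]

/-- The weight `(1 - e^{-4πy}) e^{-2πy}`. -/
def heightWeight (y : ℝ) : ℝ := (1 - Real.exp (-(4 * π * y))) * Real.exp (-(2 * π * y))

@[fun_prop]
lemma continuous_heightWeight : Continuous heightWeight := by
  unfold heightWeight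
  fun_prop

lemma abs_heightWeight_le {y : ℝ} (hy : 0 < y) : |heightWeight y| ≤ 4 * π * y := by
  have h4 : Real.exp (-(4 * π * y)) ≤ 1 := Real.exp_le_one_iff.2 (by rw [neg_nonpos]; positivity)
  have h2 : Real.exp (-(2 * π * y)) ≤ 1 := Real.exp_le_one_iff.2 (by rw [neg_nonpos]; positivity)
  rw [heightWeight, abs_of_nonneg (mul_nonneg (sub_nonneg.2 h4) (Real.exp_nonneg _))]
  refine (mul_le_of_le_one_right (sub_nonneg.2 h4) h2).trans ?_
  linarith [Real.one_sub_le_exp_neg (4 * π * y)]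

lemma exp_neg_le_one_sub_add_sq {s : ℝ} (hs : 0 ≤ s) : Real.exp (-s) ≤ 1 - s + s ^ 2 := by
  rw [Real.exp_neg]
  calc (Real.exp s)⁻¹ ≤ (s + 1)⁻¹ := inv_anti₀ (by positivity) (Real.add_one_le_exp s)
    _ ≤ 1 - s + s ^ 2 := by
      rw [inv_le_iff_one_le_mul₀ (by positivity)]
      nlinarith [pow_nonneg hs 3]

lemma abs_heightWeight_sub_le {y : ℝ} (hy : 0 < y) :
    |heightWeight y - 4 * π * y| ≤ 24 * π ^ 2 * y ^ 2 := by
  obtain ⟨s, hs⟩ : ∃ s, s = 2 * π * y := ⟨_, rfl⟩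
  have hs0 : 0 ≤ s := hs ▸ by positivity
  have hy4 : 4 * π * y = 2 * s := by rw [hs]; ring
  have hle := le_of_abs_le (abs_heightWeight_le hy)
  rw [abs_of_nonpos (sub_nonpos.2 hle), neg_sub, hy4, sub_le_iff_le_add,
    show 24 * π ^ 2 * y ^ 2 = 6 * s ^ 2 by rw [hs]; ring, heightWeight, hy4, ← hs]
  have hfirst : 2 * s - 4 * s ^ 2 ≤ 1 - Real.exp (-(2 * s)) := by
    linarith [exp_neg_le_one_sub_add_sq (mul_nonneg zero_le_two hs0)]
  have hfirst' : 1 - Real.exp (-(2 * s)) ≤ 2 * s := by linarith [Real.one_sub_le_exp_neg (2 * s)]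
  have hsecond := Real.one_sub_le_exp_neg s
  have hexp : 0 ≤ 1 - Real.exp (-(2 * s)) :=
    sub_nonneg.2 (Real.exp_le_one_iff.2 (by rw [neg_nonpos]; positivity))
  nlinarith [mul_le_mul_of_nonneg_left hsecond hexp, mul_le_mul_of_nonneg_right hfirst' hs0]

lemma enorm_setIntegral_GIProd_mul_le (ψ : 𝓢(ℝ, ℂ)) (q r : ℕ × ℕ) {w c : ℝ → ℝ}
    (hwc : ∀ y, 0 < y → |w y| ≤ c y) (Q : Set (ℝ × ℝ)) :
    ‖∫ z in Q, GIProd ψ q r z * w z.2 ∂stripMeasure‖ₑ ≤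
      ∫⁻ z in Q, GIMajorant ψ q z * GIMajorant ψ r z * ENNReal.ofReal (c z.2) ∂stripMeasure := by
  refine (enorm_integral_le_lintegral_enorm _).trans (lintegral_mono_ae ?_)
  filter_upwards [ae_restrict_of_ae ae_stripMeasure_mem] with z hz
  rw [enorm_mul, ← ofReal_norm (w z.2 : ℂ), Complex.norm_real]
  gcongr
  exacts [enorm_GIProd_le ψ q r z, hwc z.2 hz.2]

/-- By orthogonality the integral of `4πy G_I \overline{G_J}` over `Q` is minus the integral over
the complement of `Q`; what is left over `Q` carries the weight `heightWeight y - 4πy = O(y²)`. -/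
lemma enorm_setIntegral_GIProd_mul_heightWeight_le {ψ : 𝓢(ℝ, ℂ)} (hψ : 𝓕 ⇑ψ =ᶠ[𝓝 0] 0)
    (horth : Pairwise fun a b : ℤ × ℤ =>
      ∫ x, psiI ψ a.1 a.2 x * conj (psiI ψ b.1 b.2 x) = 0)
    {q r : ℕ × ℕ} (hq : q.2 < 2 ^ q.1) (hr : r.2 < 2 ^ r.1) (hqr : q ≠ r)
    {Q : Set (ℝ × ℝ)} (hQ : MeasurableSet Q) :
    ‖∫ z in Q, GIProd ψ q r z * heightWeight z.2 ∂stripMeasure‖ₑ ≤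
      (∫⁻ z in Q, GIMajorant ψ q z * GIMajorant ψ r z *
        ENNReal.ofReal (24 * π ^ 2 * z.2 ^ 2) ∂stripMeasure) +
      ∫⁻ z in Qᶜ, GIMajorant ψ q z * GIMajorant ψ r z *
        ENNReal.ofReal (4 * π * z.2) ∂stripMeasure := by
  have hlin : ∀ y : ℝ, 0 < y → |4 * π * y| ≤ 4 * π * y := fun y hy =>
    (abs_of_pos (by positivity)).le
  have hint := integrable_GIProd_mul hψ q r (by fun_prop : Measurable fun y : ℝ => 4 * π * y) hlin
  have hintw := integrable_GIProd_mul hψ q r (by fun_prop : Measurable heightWeight)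
    fun y hy => abs_heightWeight_le hy
  have hzero : ∫ z, GIProd ψ q r z * (4 * π * z.2 : ℝ) ∂stripMeasure = 0 := by
    have hcomm (z : ℝ × ℝ) : GIProd ψ q r z * (4 * π * z.2 : ℝ) =
        (4 * π : ℝ) * (GIProd ψ q r z * z.2) := by
      push_cast
      ring
    simp only [hcomm]
    rw [integral_const_mul, integral_GIProd_mul_snd_eq_zero hψ horth hq hr hqr, mul_zero]
  have hsplit : ∫ z in Q, GIProd ψ q r z * heightWeight z.2 ∂stripMeasure =
      (∫ z in Q, GIProd ψ q r z * (heightWeight z.2 - 4 * π * z.2 : ℝ) ∂stripMeasure) -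
        ∫ z in Qᶜ, GIProd ψ q r z * (4 * π * z.2 : ℝ) ∂stripMeasure := by
    rw [← integral_add_compl hQ hint] at hzero
    simp only [ofReal_sub _ (4 * π * _), mul_sub]
    rw [integral_sub hintw.integrableOn hint.integrableOn, sub_sub, hzero, sub_zero]
  rw [hsplit]
  exact enorm_sub_le.trans (add_le_add
    (enorm_setIntegral_GIProd_mul_le ψ q r (fun y hy => abs_heightWeight_sub_le hy) Q)
    (enorm_setIntegral_GIProd_mul_le ψ q r hlin Qᶜ))

lemma tsum_lintegral_GIMajorant_mul (ψ : 𝓢(ℝ, ℂ)) (A B : Set (ℕ × ℕ)) (Q : Set (ℝ × ℝ))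
    {W : ℝ × ℝ → ℝ≥0∞} (hW : Measurable W) :
    ∑' a : A ×ˢ B, ∫⁻ z in Q, GIMajorant ψ a.1.1 z * GIMajorant ψ a.1.2 z * W z ∂stripMeasure =
      ∫⁻ z in Q, familyMajorant ψ A z * familyMajorant ψ B z * W z ∂stripMeasure := by
  rw [← lintegral_tsum fun a => by fun_prop]
  refine lintegral_congr fun z => ?_
  rw [ENNReal.tsum_mul_right, ← (Equiv.Set.prod A B).symm.tsum_eq, ENNReal.tsum_prod']
  simp only [familyMajorant, ← ENNReal.tsum_mul_left, ← ENNReal.tsum_mul_right]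
  rw [ENNReal.tsum_comm]
  rfl

/-! ### The dominating kernel -/

/-- The kernel `√L / (√t (L + t))`; its singularity at `t = 0` and its decay at infinity are both
integrable, with an integral that does not depend on the scale `L`. -/
def sqrtKernel (L t : ℝ) : ℝ := √L / (√t * (L + t))

lemma sqrtKernel_nonneg {L t : ℝ} (hL : 0 ≤ L) (ht : 0 ≤ t) : 0 ≤ sqrtKernel L t := by
  unfold sqrtKernel
  positivity

@[fun_prop]
lemma measurable_sqrtKernel (L : ℝ) : Measurable (sqrtKernel L) := by
  unfold sqrtKernel
  fun_prop

lemma hasDerivAt_two_mul_arctan_sqrt_div {L t : ℝ} (hL : 0 < L) (ht : 0 < t) :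
    HasDerivAt (fun t => 2 * Real.arctan √(t / L)) (sqrtKernel L t) t := by
  have hderiv :=
    (((hasDerivAt_id t).div_const L).sqrt (div_pos ht hL).ne').arctan.const_mul 2
  refine hderiv.congr_deriv ?_
  simp only [id, sqrtKernel]
  rw [Real.sq_sqrt (by positivity), Real.sqrt_div ht.le]
  field_simp

lemma integral_Ioi_sqrtKernel {L : ℝ} (hL : 0 < L) : ∫ t in Ioi 0, sqrtKernel L t = π := by
  have hderiv : ∀ t ∈ Ioi (0 : ℝ), HasDerivAt _ (sqrtKernel L t) t := fun t ht =>
    hasDerivAt_two_mul_arctan_sqrt_div hL ht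
  have hlim : Tendsto (fun t => 2 * Real.arctan √(t / L)) atTop (𝓝 (2 * (π / 2))) :=
    ((tendsto_nhds_of_tendsto_nhdsWithin tendsto_arctan_atTop).comp
      (tendsto_sqrt_atTop.comp (tendsto_id.atTop_div_const hL))).const_mul 2
  rw [integral_Ioi_of_hasDerivAt_of_nonneg
    (Continuous.continuousWithinAt (by fun_prop)) hderiv
    (fun t ht => sqrtKernel_nonneg hL.le (le_of_lt ht)) hlim, zero_div, Real.sqrt_zero,
    Real.arctan_zero]
  ring

lemma lintegral_Ioi_sqrtKernel {L : ℝ} (hL : 0 < L) :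
    ∫⁻ t in Ioi 0, ENNReal.ofReal (sqrtKernel L t) = ENNReal.ofReal π := by
  have hval := integral_Ioi_sqrtKernel hL
  rw [← hval, ofReal_integral_eq_lintegral_ofReal
    (.of_integral_ne_zero (hval.trans_ne Real.pi_ne_zero))]
  filter_upwards [ae_restrict_mem measurableSet_Ioi] with t ht
  exact sqrtKernel_nonneg hL.le (le_of_lt ht)

lemma lintegral_sqrtKernel_abs_sub {L : ℝ} (hL : 0 < L) (a : ℝ) :
    ∫⁻ x, ENNReal.ofReal (sqrtKernel L |x - a|) = ENNReal.ofReal (2 * π) := by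
  have hval : ∫ x, sqrtKernel L |x| = 2 * π := by rw [integral_comp_abs, integral_Ioi_sqrtKernel hL]
  rw [lintegral_sub_right_eq_self (fun x => ENNReal.ofReal (sqrtKernel L |x|)) a, ← hval,
    ofReal_integral_eq_lintegral_ofReal
      (.of_integral_ne_zero (hval.trans_ne Real.two_pi_pos.ne'))]
  exact .of_forall fun x => sqrtKernel_nonneg hL.le (abs_nonneg x)

lemma lintegral_sqrtKernel_infDist_le {L : ℝ} (hL : 0 < L) {E : Finset ℝ} (hE : E.Nonempty) :
    ∫⁻ x, ENNReal.ofReal (sqrtKernel L (Metric.infDist x (E : Set ℝ))) ≤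
      ENNReal.ofReal (E.card * (2 * π)) := by
  calc ∫⁻ x, ENNReal.ofReal (sqrtKernel L (Metric.infDist x (E : Set ℝ)))
      ≤ ∫⁻ x, ∑ e ∈ E, ENNReal.ofReal (sqrtKernel L |x - e|) := by
        refine lintegral_mono fun x => ?_
        obtain ⟨e, he, hdist⟩ := E.finite_toSet.isCompact.exists_infDist_eq_dist hE x
        rw [hdist, Real.dist_eq]
        exact Finset.single_le_sum (f := fun e => ENNReal.ofReal (sqrtKernel L |x - e|))
          (fun _ _ => zero_le) he
    _ = ENNReal.ofReal (E.card * (2 * π)) := by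
        rw [lintegral_finsetSum _ fun e _ => by fun_prop,
          Finset.sum_congr rfl fun e _ => lintegral_sqrtKernel_abs_sub hL e, Finset.sum_const,
          ← ENNReal.ofReal_nsmul, nsmul_eq_mul]

/-- The majorant `L √L √L / (√D (L + D) √y (L + y))` to which all three estimates over the strip
are reduced, `L` being the length of the interval and `D` a distance to its endpoints. -/
def stripKernel (L D y : ℝ) : ℝ := L * (sqrtKernel L D * sqrtKernel L y)

lemma lintegral_stripKernel_infDist_le {L : ℝ} (hL : 0 < L) {E : Finset ℝ} (hE : E.Nonempty) :
    ∫⁻ z, ENNReal.ofReal (stripKernel L (Metric.infDist z.1 (E : Set ℝ)) z.2) ∂stripMeasure ≤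
      ENNReal.ofReal (2 * π ^ 2 * E.card * L) := by
  have hfactor (z : ℝ × ℝ) : ENNReal.ofReal (stripKernel L (Metric.infDist z.1 (E : Set ℝ)) z.2) =
      ENNReal.ofReal L * (ENNReal.ofReal (sqrtKernel L (Metric.infDist z.1 (E : Set ℝ))) *
        ENNReal.ofReal (sqrtKernel L z.2)) := by
    rw [stripKernel, ENNReal.ofReal_mul hL.le,
      ENNReal.ofReal_mul (sqrtKernel_nonneg hL.le Metric.infDist_nonneg)]
  have hmeas : Measurable fun x => ENNReal.ofReal (sqrtKernel L (Metric.infDist x (E : Set ℝ))) :=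
    ((measurable_sqrtKernel L).comp measurable_infDist).ennreal_ofReal
  simp only [hfactor]
  rw [lintegral_const_mul' _ _ ENNReal.ofReal_ne_top, stripMeasure,
    lintegral_prod_mul hmeas.aemeasurable
      (measurable_sqrtKernel L).ennreal_ofReal.aemeasurable, lintegral_Ioi_sqrtKernel hL]
  calc _ ≤ ENNReal.ofReal L * (ENNReal.ofReal (E.card * (2 * π)) * ENNReal.ofReal π) := by
        gcongr
        exact (setLIntegral_le_lintegral _ _).trans (lintegral_sqrtKernel_infDist_le hL hE)
    _ = ENNReal.ofReal (2 * π ^ 2 * E.card * L) := by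
        rw [← ENNReal.ofReal_mul (by positivity), ← ENNReal.ofReal_mul hL.le]
        congr 1
        ring

lemma stripKernel_eq {L : ℝ} (hL : 0 ≤ L) (D y : ℝ) :
    stripKernel L D y = L ^ 2 / (√D * √y * ((L + D) * (L + y))) := by
  rw [stripKernel, sqrtKernel, sqrtKernel, div_mul_div_comm, Real.mul_self_sqrt hL]
  ring

lemma sqrt_mul_sqrt_le_half_add {a b : ℝ} (ha : 0 ≤ a) (hb : 0 ≤ b) :
    √a * √b ≤ (a + b) / 2 := by
  have := two_mul_le_add_sq √a √b
  rw [Real.sq_sqrt ha, Real.sq_sqrt hb] at this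
  linarith

lemma sq_div_add_sq_le_stripKernel {L D y : ℝ} (hL : 0 < L) (hL1 : L ≤ 1) (hD : 0 < D)
    (hDL : D ≤ L) (hy : 0 < y) : L ^ 2 / (L + y) ^ 2 ≤ stripKernel L D y := by
  rw [stripKernel_eq hL.le]
  refine div_le_div_of_nonneg_left (by positivity) (by positivity) ?_
  calc √D * √y * ((L + D) * (L + y))
      ≤ (D + y) / 2 * ((L + D) * (L + y)) := by
        gcongr
        exact sqrt_mul_sqrt_le_half_add hD.le hy.le
    _ ≤ (L + y) / 2 * ((1 + 1) * (L + y)) := by gcongr; linarith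
    _ = (L + y) ^ 2 := by ring

lemma sq_div_mul_le_stripKernel {L D y : ℝ} (hL : 0 < L) (hD : 0 < D) (hy : 0 < y) :
    (L / ((y + D) * (L + (y + D)))) ^ 2 * y ≤ stripKernel L D y := by
  rw [stripKernel_eq hL.le, div_pow, mul_pow, div_mul_eq_mul_div]
  calc L ^ 2 * y / ((y + D) ^ 2 * (L + (y + D)) ^ 2)
      ≤ L ^ 2 * (y + D) / ((y + D) ^ 2 * (L + (y + D)) ^ 2) := by gcongr; linarith
    _ = L ^ 2 / ((y + D) * ((L + (y + D)) * (L + (y + D)))) := by field_simp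
    _ ≤ L ^ 2 / (√D * √y * ((L + D) * (L + y))) := by
        gcongr
        · linarith [sqrt_mul_sqrt_le_half_add hD.le hy.le]
        · linarith
        · linarith

lemma inv_add_le_stripKernel {L D y : ℝ} (hL : 0 < L) (hD : 0 < D) (hDL : D ≤ L) (hy : 0 < y)
    (hyL : y ≤ L) : (y + D)⁻¹ ≤ 4 * stripKernel L D y := by
  rw [stripKernel_eq hL.le]
  calc (y + D)⁻¹ = 4 * (L ^ 2 / ((y + D) * ((L + L) * (L + L)))) := by field_simp; norm_num
    _ ≤ 4 * (L ^ 2 / (√D * √y * ((L + D) * (L + y)))) := by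
        gcongr
        linarith [sqrt_mul_sqrt_le_half_add hD.le hy.le]

/-! ### Dyadic intervals -/

lemma len_natCast (j : ℕ) : len j = (2 ^ j)⁻¹ := by
  rw [len, zpow_neg, zpow_natCast]

lemma len_natCast_le_one (j : ℕ) : len j ≤ 1 := by
  rw [len_natCast]
  exact inv_le_one_of_one_le₀ (one_le_pow₀ one_le_two)

lemma len_natCast_le_len_iff {i j : ℕ} : len i ≤ len j ↔ j ≤ i := by
  rw [len_natCast, len_natCast, inv_le_inv₀ (by positivity) (by positivity),
    pow_le_pow_iff_right₀ one_lt_two]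

lemma mem_dySet_iff {j k : ℕ} {x : ℝ} : x ∈ dySet j k ↔ 0 ≤ x ∧ ⌊x * 2 ^ j⌋₊ = k := by
  have hmem : x ∈ dySet j k ↔ (k : ℝ) ≤ x * 2 ^ j ∧ x * 2 ^ j < k + 1 := by
    rw [dySet, len_natCast, mem_Ico, mul_inv_le_iff₀ (by positivity),
      lt_mul_inv_iff₀ (by positivity)]
  constructor
  · intro hx
    have hx0 : 0 ≤ x * 2 ^ j := k.cast_nonneg.trans (hmem.1 hx).1
    exact ⟨nonneg_of_mul_nonneg_left hx0 (by positivity), (Nat.floor_eq_iff hx0).2 (hmem.1 hx)⟩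
  · rintro ⟨hx0, hfloor⟩
    exact hmem.2 ((Nat.floor_eq_iff (by positivity)).1 hfloor)

lemma dySet_subset_dySet_of_mem {j k j' k' : ℕ} {c : ℝ} (hj : j' ≤ j) (hc : c ∈ dySet j k)
    (hc' : c ∈ dySet j' k') : dySet j k ⊆ dySet j' k' := by
  obtain ⟨n, rfl⟩ := Nat.exists_eq_add_of_le hj
  have hfloor (x : ℝ) : ⌊x * 2 ^ j'⌋₊ = ⌊x * 2 ^ (j' + n)⌋₊ / 2 ^ n := by
    rw [← Nat.floor_div_natCast, pow_add, ← mul_assoc]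
    simp
  intro x hx
  rw [mem_dySet_iff] at hx hc hc' ⊢
  exact ⟨hx.1, by rw [hfloor, hx.2, ← hc.2, ← hfloor, hc'.2]⟩

lemma dySet_subset_Ico_zero_one {j k : ℕ} (hk : k < 2 ^ j) : dySet j k ⊆ Ico 0 1 := by
  have hl := len_pos j
  have hk1 : ((k : ℝ) + 1) ≤ 2 ^ j := mod_cast hk
  refine Ico_subset_Ico (by positivity) ?_
  rw [len_natCast]
  exact mul_inv_le_one_of_le₀ hk1 (by positivity)

lemma ctr_mem_dySet (j k : ℕ) : ctr j k ∈ dySet j k := by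
  have hl := len_pos j
  rw [ctr_eq, Int.cast_natCast, mul_comm]
  exact ⟨by gcongr; linarith, by gcongr; linarith⟩

lemma le_of_dySet_subset_dySet {j k j' k' : ℕ} (h : dySet j k ⊆ dySet j' k') : j' ≤ j := by
  have hl := len_pos j
  rw [dySet, dySet, Ico_subset_Ico_iff (by gcongr; linarith)] at h
  rw [← len_natCast_le_len_iff]
  linarith [h.1, h.2]

lemma measurableSet_ySet (j : ℕ) : MeasurableSet (ySet j) := by
  unfold ySet
  split_ifs
  exacts [measurableSet_Ioi, measurableSet_Ioo]

lemma pos_of_mem_ySet {j : ℕ} {y : ℝ} (hy : y ∈ ySet j) : 0 < y := by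
  unfold ySet at hy
  split_ifs at hy
  exacts [hy, hy.1]

lemma len_natCast_le_half {j : ℕ} (hj : j ≠ 0) : len j ≤ 1 / 2 := by
  obtain ⟨i, rfl⟩ := Nat.exists_eq_succ_of_ne_zero hj
  rw [len_succ]
  linarith [len_natCast_le_one i]

lemma le_len_of_mem_ySet {j : ℕ} (hj : j ≠ 0) {y : ℝ} (hy : y ∈ ySet j) : y ≤ len j := by
  have hl := len_pos j
  have hhalf := len_natCast_le_half hj
  rw [ySet, if_neg hj] at hy
  refine hy.2.le.trans ?_
  have hlog : 1 - (1 - len j)⁻¹ ≤ Real.log (1 - len j) :=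
    Real.one_sub_inv_le_log_of_pos (by linarith)
  have hinv : (1 - len j)⁻¹ ≤ 1 + 2 * len j := by
    rw [inv_le_iff_one_le_mul₀ (by linarith)]
    nlinarith
  rw [div_le_iff₀ (by positivity)]
  nlinarith [Real.pi_gt_three]

lemma len_le_mul_of_notMem_ySet {j : ℕ} {y : ℝ} (hy0 : 0 < y) (hy : y ∉ ySet j) :
    len j ≤ 2 * π * y := by
  by_cases hj : j = 0
  · rw [ySet, if_pos hj] at hy
    exact absurd hy0 hy
  rw [ySet, if_neg hj] at hy
  have hle : -Real.log (1 - len j) / (2 * π) ≤ y := not_lt.1 fun h => hy ⟨hy0, h⟩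
  rw [div_le_iff₀' (by positivity)] at hle
  linarith [Real.log_le_sub_one_of_pos (x := 1 - len j) (by linarith [len_natCast_le_half hj])]

/-- The endpoints `a, b` of the dyadic interval `K` together with `a + 1` and `b - 1`, the
endpoints through which the translates `K + 1` and `K - 1` are entered from `[0,1)`. -/
def periodicEndpoints (j k : ℕ) : Finset ℝ :=
  {k * len j, (k + 1) * len j, k * len j + 1, (k + 1) * len j - 1}

/-- The distance from `x` to the set `periodicEndpoints j k`. -/
def endpointDist (j k : ℕ) (x : ℝ) : ℝ := Metric.infDist x (periodicEndpoints j k : Set ℝ)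

lemma periodicEndpoints_nonempty (j k : ℕ) : (periodicEndpoints j k).Nonempty :=
  Finset.insert_nonempty _ _

lemma ae_endpointDist_pos (j k : ℕ) : ∀ᵐ z ∂stripMeasure, 0 < endpointDist j k z.1 := by
  have hne : ∀ᵐ x ∂volume.restrict (Ico (0 : ℝ) 1), x ∉ (periodicEndpoints j k : Set ℝ) :=
    measure_eq_zero_iff_ae_notMem.1 ((periodicEndpoints j k).finite_toSet.measure_zero _)
  filter_upwards [Measure.quasiMeasurePreserving_fst.ae hne] with z hz
  exact ((periodicEndpoints j k).finite_toSet.isClosed.notMem_iff_infDist_pos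
    (periodicEndpoints_nonempty j k)).1 hz

lemma infDist_le_abs_sub_of_mem_uIcc {E : Set ℝ} {x c e : ℝ} (he : e ∈ E) (hxc : e ∈ uIcc x c) :
    Metric.infDist x E ≤ |x - c| := by
  refine (Metric.infDist_le_dist_of_mem he).trans ?_
  rw [Real.dist_eq, abs_sub_comm, abs_sub_comm x]
  exact abs_sub_left_of_mem_uIcc hxc

lemma left_or_right_mem_uIcc {a b x c : ℝ} (hx : x ∈ Ico a b) (hc : c ∉ Ico a b) :
    a ∈ uIcc x c ∨ b ∈ uIcc x c := by
  rcases lt_or_ge c a with hca | hac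
  · exact .inl (mem_uIcc.2 (.inr ⟨hca.le, hx.1⟩))
  · exact .inr (mem_uIcc.2 (.inl ⟨hx.2.le, not_lt.1 fun hcb => hc ⟨hac, hcb⟩⟩))

lemma endpointDist_le_len {j k : ℕ} {x : ℝ} (hx : x ∈ dySet j k) : endpointDist j k x ≤ len j := by
  have hleft : (k : ℝ) * len j ∈ (periodicEndpoints j k : Set ℝ) := by simp [periodicEndpoints]
  refine (Metric.infDist_le_dist_of_mem hleft).trans ?_
  rw [Real.dist_eq, abs_of_nonneg (sub_nonneg.2 hx.1)]
  linarith [hx.2]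

lemma endpointDist_le_of_xor {j k : ℕ} {x c : ℝ} (h : Xor (x ∈ dySet j k) (c ∈ dySet j k)) :
    endpointDist j k x ≤ |x - c| := by
  have hmem : (k : ℝ) * len j ∈ uIcc x c ∨ ((k : ℝ) + 1) * len j ∈ uIcc x c := by
    rcases h with ⟨hx, hc⟩ | ⟨hc, hx⟩
    · exact left_or_right_mem_uIcc hx hc
    · rw [uIcc_comm]
      exact left_or_right_mem_uIcc hc hx
  rcases hmem with he | he <;>
    exact infDist_le_abs_sub_of_mem_uIcc (by simp [periodicEndpoints]) he

lemma endpointDist_le_of_mem_of_notMem {j k : ℕ} (hk : k < 2 ^ j) {x c : ℝ} (hx : x ∈ dySet j k)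
    (hc : c ∈ Ico (0 : ℝ) 1) (hcK : c ∉ dySet j k) (m : ℤ) :
    endpointDist j k x ≤ |x - m - c| := by
  rw [sub_sub, add_comm]
  refine endpointDist_le_of_xor (.inl ⟨hx, fun hmem => ?_⟩)
  have hfloor := Int.floor_eq_zero_iff.2 (dySet_subset_Ico_zero_one hk hmem)
  rw [Int.floor_add_intCast, Int.floor_eq_zero_iff.2 hc, zero_add] at hfloor
  exact hcK (by simpa [hfloor] using hmem)

lemma endpointDist_le_of_notMem_of_mem {j k : ℕ} (hk : k < 2 ^ j) {x c : ℝ}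
    (hx : x ∈ Ico (0 : ℝ) 1) (hxK : x ∉ dySet j k) (hc : c ∈ dySet j k) (m : ℤ) :
    endpointDist j k x ≤ |x - m - c| := by
  have hK : Ico ((k : ℝ) * len j) ((k + 1) * len j) ⊆ Ico 0 1 := dySet_subset_Ico_zero_one hk
  obtain ⟨ha, hb⟩ := (Ico_subset_Ico_iff (hc.1.trans_lt hc.2)).1 hK
  rw [sub_sub, add_comm]
  rcases lt_trichotomy m 0 with hm | rfl | hm
  · have hm' : (m : ℝ) ≤ -1 := mod_cast Int.le_sub_one_of_lt hm
    refine infDist_le_abs_sub_of_mem_uIcc (e := (k + 1) * len j - 1) (by simp [periodicEndpoints])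
      (mem_uIcc.2 (.inr ⟨?_, ?_⟩)) <;> linarith [hx.1, hc.2]
  · simpa using endpointDist_le_of_xor (.inr ⟨hc, hxK⟩)
  · have hm' : (1 : ℝ) ≤ m := mod_cast hm
    refine infDist_le_abs_sub_of_mem_uIcc (e := k * len j + 1) (by simp [periodicEndpoints])
      (mem_uIcc.2 (.inl ⟨?_, ?_⟩)) <;> linarith [hx.2, hc.1]

/-- The set `Q̃_K`. -/
def tildeBox (j k : ℕ) : Set (ℝ × ℝ) := dySet j k ×ˢ ySet j

/-- The dyadic intervals contained in `[0,1)`. -/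
def unitFamily : Set (ℕ × ℕ) := {p | p.2 < 2 ^ p.1}

/-- The dyadic intervals contained in `K`. -/
def insideFamily (j k : ℕ) : Set (ℕ × ℕ) := {p ∈ unitFamily | dySet p.1 p.2 ⊆ dySet j k}

/-- The dyadic intervals contained in `[0,1)` but not in `K`. -/
def outsideFamily (j k : ℕ) : Set (ℕ × ℕ) := unitFamily \ insideFamily j k

lemma measurableSet_tildeBox (j k : ℕ) : MeasurableSet (tildeBox j k) :=
  measurableSet_Ico.prod (measurableSet_ySet j)

section Decay

variable {ψ : 𝓢(ℝ, ℂ)} {C : ℝ} {j k : ℕ} {z : ℝ × ℝ}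

lemma FamilyDecay.familyMajorant_insideFamily_le (h : FamilyDecay ψ C) (hy : 0 < z.2) :
    familyMajorant ψ (insideFamily j k) z ≤
      ENNReal.ofReal (C * (len j / (z.2 * (len j + z.2)))) := by
  refine h _ z j z.2 hy.le hy fun p hp => ⟨hp.1, le_of_dySet_subset_dySet hp.2, fun m => ?_⟩
  linarith [len_pos p.1, abs_nonneg (z.1 - m - ctr p.1 p.2)]

lemma FamilyDecay.familyMajorant_insideFamily_le_of_notMem (h : FamilyDecay ψ C) (hC : 0 ≤ C)
    (hk : k < 2 ^ j) (hx : z.1 ∈ Ico (0 : ℝ) 1) (hy : 0 < z.2) (hD : 0 < endpointDist j k z.1)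
    (hz : z ∉ tildeBox j k) :
    familyMajorant ψ (insideFamily j k) z ≤ ENNReal.ofReal (16 * C *
      (len j / ((z.2 + endpointDist j k z.1) * (len j + (z.2 + endpointDist j k z.1))))) := by
  have hl := len_pos j
  set D := endpointDist j k z.1
  refine (h _ z j ((z.2 + D) / 4) hy.le (by positivity) fun p hp =>
    ⟨hp.1, le_of_dySet_subset_dySet hp.2, fun m => ?_⟩).trans (ENNReal.ofReal_le_ofReal ?_)
  · have hlp := len_pos p.1
    have habs := abs_nonneg (z.1 - m - ctr p.1 p.2)
    by_cases hxK : z.1 ∈ dySet j k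
    · have hD_le : D ≤ 2 * π * z.2 := (endpointDist_le_len hxK).trans
        (len_le_mul_of_notMem_ySet hy fun hyK => hz ⟨hxK, hyK⟩)
      nlinarith [Real.pi_lt_d2]
    · have hD_le : D ≤ |z.1 - m - ctr p.1 p.2| :=
        endpointDist_le_of_notMem_of_mem hk hx hxK (hp.2 (ctr_mem_dySet p.1 p.2)) m
      linarith
  · calc C * (len j / ((z.2 + D) / 4 * (len j + (z.2 + D) / 4)))
        ≤ C * (len j / ((z.2 + D) / 4 * ((len j + (z.2 + D)) / 4))) := by gcongr; linarith
      _ = 16 * C * (len j / ((z.2 + D) * (len j + (z.2 + D)))) := by field_simp; norm_num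

lemma FamilyDecay.familyMajorant_le_inv (h : FamilyDecay ψ C) (hC : 0 ≤ C) {A : Set (ℕ × ℕ)}
    {R : ℝ} (hy : 0 ≤ z.2) (hR : 0 < R) (hA : ∀ p ∈ A, p ∈ unitFamily ∧
      ∀ m : ℤ, R ≤ 2 * (len p.1 + |z.1 - m - ctr p.1 p.2| + z.2)) :
    familyMajorant ψ A z ≤ ENNReal.ofReal (C * R⁻¹) := by
  refine (h A z 0 R hy hR fun p hp => ⟨(hA p hp).1, zero_le, (hA p hp).2⟩).trans ?_
  have hlen : len (0 : ℕ) = 1 := by simp [len]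
  rw [hlen, ← one_div]
  refine ENNReal.ofReal_le_ofReal ?_
  gcongr
  nlinarith

lemma FamilyDecay.familyMajorant_unitFamily_le (h : FamilyDecay ψ C) (hC : 0 ≤ C)
    (hy : 0 < z.2) : familyMajorant ψ unitFamily z ≤ ENNReal.ofReal (C * z.2⁻¹) := by
  refine h.familyMajorant_le_inv hC hy.le hy fun p hp => ⟨hp, fun m => ?_⟩
  linarith [len_pos p.1, abs_nonneg (z.1 - m - ctr p.1 p.2)]

lemma FamilyDecay.familyMajorant_outsideFamily_le (h : FamilyDecay ψ C) (hC : 0 ≤ C)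
    (hk : k < 2 ^ j) (hx : z.1 ∈ dySet j k) (hy : 0 < z.2) :
    familyMajorant ψ (outsideFamily j k) z ≤
      ENNReal.ofReal (C * (z.2 + endpointDist j k z.1)⁻¹) := by
  have hD0 : 0 ≤ endpointDist j k z.1 := Metric.infDist_nonneg
  refine h.familyMajorant_le_inv hC hy.le (by positivity) fun p hp => ⟨hp.1, fun m => ?_⟩
  have hlp := len_pos p.1
  have habs := abs_nonneg (z.1 - m - ctr p.1 p.2)
  have hctr := ctr_mem_dySet p.1 p.2
  suffices endpointDist j k z.1 ≤ len p.1 + |z.1 - m - ctr p.1 p.2| by linarith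
  by_cases hcK : ctr p.1 p.2 ∈ dySet j k
  · have hlevel : p.1 ≤ j := le_of_not_ge fun hj =>
      hp.2 ⟨hp.1, dySet_subset_dySet_of_mem hj hctr hcK⟩
    linarith [endpointDist_le_len hx, len_natCast_le_len_iff.2 hlevel]
  · have hc01 := dySet_subset_Ico_zero_one hp.1 hctr
    linarith [endpointDist_le_of_mem_of_notMem hk hx hc01 hcK m]

end Decay

lemma setLIntegral_le_of_le_stripKernel {j k : ℕ} {Q : Set (ℝ × ℝ)} (hQ : MeasurableSet Q)
    {f : ℝ × ℝ → ℝ≥0∞} {B : ℝ} (hB : 0 ≤ B)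
    (hf : ∀ z ∈ Q, z.1 ∈ Ico 0 1 → 0 < z.2 → 0 < endpointDist j k z.1 →
      f z ≤ ENNReal.ofReal (B * stripKernel (len j) (endpointDist j k z.1) z.2)) :
    ∫⁻ z in Q, f z ∂stripMeasure ≤ ENNReal.ofReal (B * (8 * π ^ 2) * len j) := by
  have hl := len_pos j
  have hcard : ((periodicEndpoints j k).card : ℝ) ≤ 4 := Nat.cast_le_ofNat.2 Finset.card_le_four
  calc ∫⁻ z in Q, f z ∂stripMeasure
      ≤ ∫⁻ z in Q, ENNReal.ofReal B *
          ENNReal.ofReal (stripKernel (len j) (endpointDist j k z.1) z.2) ∂stripMeasure := by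
        refine lintegral_mono_ae ?_
        filter_upwards [ae_restrict_mem hQ, ae_restrict_of_ae ae_stripMeasure_mem,
          ae_restrict_of_ae (ae_endpointDist_pos j k)] with z hzQ hz hD
        rw [← ENNReal.ofReal_mul hB]
        exact hf z hzQ hz.1 hz.2 hD
    _ ≤ ENNReal.ofReal B *
          ENNReal.ofReal (2 * π ^ 2 * (periodicEndpoints j k).card * len j) := by
        rw [lintegral_const_mul' _ _ ENNReal.ofReal_ne_top]
        gcongr
        exact (setLIntegral_le_lintegral _ _).trans
          (lintegral_stripKernel_infDist_le hl (periodicEndpoints_nonempty j k))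
    _ ≤ ENNReal.ofReal (B * (8 * π ^ 2) * len j) := by
        rw [← ENNReal.ofReal_mul hB]
        refine ENNReal.ofReal_le_ofReal ?_
        calc B * (2 * π ^ 2 * (periodicEndpoints j k).card * len j)
            ≤ B * (2 * π ^ 2 * 4 * len j) := by gcongr
          _ = B * (8 * π ^ 2) * len j := by ring

lemma mul_mul_ofReal_le {u v : ℝ≥0∞} {a b w c : ℝ} (ha : 0 ≤ a) (hb : 0 ≤ b)
    (hu : u ≤ ENNReal.ofReal a) (hv : v ≤ ENNReal.ofReal b) (h : a * b * w ≤ c) :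
    u * v * ENNReal.ofReal w ≤ ENNReal.ofReal c :=
  calc u * v * ENNReal.ofReal w
      ≤ ENNReal.ofReal a * ENNReal.ofReal b * ENNReal.ofReal w := by gcongr
    _ = ENNReal.ofReal (a * b * w) := by
        rw [← ENNReal.ofReal_mul ha, ← ENNReal.ofReal_mul (by positivity)]
    _ ≤ ENNReal.ofReal c := ENNReal.ofReal_le_ofReal h

section Estimates

variable {ψ : 𝓢(ℝ, ℂ)} {C : ℝ} {j k : ℕ}

lemma FamilyDecay.setLIntegral_insideFamily_sq_le (h : FamilyDecay ψ C) (hC : 0 ≤ C) :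
    ∫⁻ z in tildeBox j k, familyMajorant ψ (insideFamily j k) z *
        familyMajorant ψ (insideFamily j k) z * ENNReal.ofReal (24 * π ^ 2 * z.2 ^ 2)
        ∂stripMeasure ≤
      ENNReal.ofReal (24 * π ^ 2 * C ^ 2 * (8 * π ^ 2) * len j) := by
  have hl := len_pos j
  refine setLIntegral_le_of_le_stripKernel (k := k) (measurableSet_tildeBox j k) (by positivity)
    fun z hz _ hy hD => ?_
  have hA := h.familyMajorant_insideFamily_le (j := j) (k := k) hy
  refine mul_mul_ofReal_le (by positivity) (by positivity) hA hA ?_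
  calc _ = 24 * π ^ 2 * C ^ 2 * (len j ^ 2 / (len j + z.2) ^ 2) := by field_simp
    _ ≤ _ := by
        gcongr
        exact sq_div_add_sq_le_stripKernel hl (len_natCast_le_one j) hD
          (endpointDist_le_len hz.1) hy

lemma FamilyDecay.setLIntegral_compl_insideFamily_sq_le (h : FamilyDecay ψ C) (hC : 0 ≤ C)
    (hk : k < 2 ^ j) :
    ∫⁻ z in (tildeBox j k)ᶜ, familyMajorant ψ (insideFamily j k) z *
        familyMajorant ψ (insideFamily j k) z * ENNReal.ofReal (4 * π * z.2) ∂stripMeasure ≤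
      ENNReal.ofReal (1024 * π * C ^ 2 * (8 * π ^ 2) * len j) := by
  have hl := len_pos j
  refine setLIntegral_le_of_le_stripKernel (k := k) (measurableSet_tildeBox j k).compl
    (by positivity) fun z hz hx hy hD => ?_
  have hA := h.familyMajorant_insideFamily_le_of_notMem hC hk hx hy hD hz
  refine mul_mul_ofReal_le (by positivity) (by positivity) hA hA ?_
  set D := endpointDist j k z.1
  calc _ = 1024 * π * C ^ 2 *
        ((len j / ((z.2 + D) * (len j + (z.2 + D)))) ^ 2 * z.2) := by ring
    _ ≤ _ := by
        gcongr
        exact sq_div_mul_le_stripKernel hl hD hy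

lemma outsideFamily_zero : outsideFamily 0 0 = ∅ := by
  refine sdiff_eq_empty.2 fun p hp => ⟨hp, (dySet_subset_Ico_zero_one hp).trans ?_⟩
  simp [dySet, len]

lemma FamilyDecay.setLIntegral_outsideFamily_mul_le (h : FamilyDecay ψ C) (hC : 0 ≤ C)
    (hk : k < 2 ^ j) :
    ∫⁻ z in tildeBox j k, familyMajorant ψ (outsideFamily j k) z *
        familyMajorant ψ unitFamily z * ENNReal.ofReal (4 * π * z.2) ∂stripMeasure ≤
      ENNReal.ofReal (16 * π * C ^ 2 * (8 * π ^ 2) * len j) := by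
  have hl := len_pos j
  rcases eq_or_ne j 0 with rfl | hj
  · obtain rfl : k = 0 := by simpa using hk
    simp [outsideFamily_zero, familyMajorant]
  refine setLIntegral_le_of_le_stripKernel (k := k) (measurableSet_tildeBox j k) (by positivity)
    fun z hz _ hy hD => ?_
  refine mul_mul_ofReal_le (by positivity) (by positivity)
    (h.familyMajorant_outsideFamily_le hC hk hz.1 hy) (h.familyMajorant_unitFamily_le hC hy) ?_
  set D := endpointDist j k z.1
  calc _ = 4 * π * C ^ 2 * (z.2 + D)⁻¹ := by field_simp
    _ ≤ 4 * π * C ^ 2 * (4 * stripKernel (len j) D z.2) := by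
        gcongr
        exact inv_add_le_stripKernel hl hD (endpointDist_le_len hz.1) hy
          (le_len_of_mem_ySet hj hz.2)
    _ = _ := by ring

end Estimates

/-! ### Summation over pairs -/

/-- The integral of `G_I \overline{G_J}` against `heightWeight` over `Q̃_K`. -/
def boxPairing (ψ : 𝓢(ℝ, ℂ)) (j k : ℕ) (q : (ℕ × ℕ) × ℕ × ℕ) : ℂ :=
  ∫ z in tildeBox j k, GIProd ψ q.1 q.2 z * heightWeight z.2 ∂stripMeasure

lemma setIntegral_setIntegral_eq_boxPairing {ψ : 𝓢(ℝ, ℂ)} (hψ : 𝓕 ⇑ψ =ᶠ[𝓝 0] 0) {j k : ℕ}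
    (hk : k < 2 ^ j) (q : (ℕ × ℕ) × ℕ × ℕ) :
    ∫ x in dySet j k, ∫ y in ySet j, GIProd ψ q.1 q.2 (x, y) * heightWeight y =
      boxPairing ψ j k q := by
  have hsub : tildeBox j k ⊆ Ico 0 1 ×ˢ Ioi 0 :=
    prod_mono (dySet_subset_Ico_zero_one hk) fun y => pos_of_mem_ySet
  have hrestrict : stripMeasure.restrict (tildeBox j k) =
      (volume.prod volume).restrict (tildeBox j k) := by
    rw [stripMeasure_eq_restrict, Measure.restrict_restrict (measurableSet_tildeBox j k),
      inter_eq_left.2 hsub]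
    rfl
  have hint := (integrable_GIProd_mul hψ q.1 q.2 continuous_heightWeight.measurable
    fun y hy => abs_heightWeight_le hy).integrableOn (s := tildeBox j k)
  rw [IntegrableOn, hrestrict] at hint
  rw [boxPairing, hrestrict]
  exact (setIntegral_prod _ hint).symm

lemma tsum_prod_enorm_boxPairing_le (ψ : 𝓢(ℝ, ℂ)) (A B : Set (ℕ × ℕ)) (j k : ℕ) :
    ∑' q : A ×ˢ B, ‖boxPairing ψ j k q‖ₑ ≤
      ∫⁻ z in tildeBox j k, familyMajorant ψ A z * familyMajorant ψ B z *
        ENNReal.ofReal (4 * π * z.2) ∂stripMeasure := by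
  rw [← tsum_lintegral_GIMajorant_mul ψ A B _ (by fun_prop)]
  exact ENNReal.tsum_le_tsum fun q => enorm_setIntegral_GIProd_mul_le ψ q.1.1 q.1.2
    (fun y hy => abs_heightWeight_le hy) _

lemma tsum_offDiag_enorm_boxPairing_le {ψ : 𝓢(ℝ, ℂ)} (hψ : 𝓕 ⇑ψ =ᶠ[𝓝 0] 0)
    (horth : Pairwise fun a b : ℤ × ℤ =>
      ∫ x, psiI ψ a.1 a.2 x * conj (psiI ψ b.1 b.2 x) = 0)
    {A : Set (ℕ × ℕ)} (hA : A ⊆ unitFamily) (j k : ℕ) :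
    ∑' q : A.offDiag, ‖boxPairing ψ j k q‖ₑ ≤
      (∫⁻ z in tildeBox j k, familyMajorant ψ A z * familyMajorant ψ A z *
        ENNReal.ofReal (24 * π ^ 2 * z.2 ^ 2) ∂stripMeasure) +
      ∫⁻ z in (tildeBox j k)ᶜ, familyMajorant ψ A z * familyMajorant ψ A z *
        ENNReal.ofReal (4 * π * z.2) ∂stripMeasure := by
  rw [← tsum_lintegral_GIMajorant_mul ψ A A _ (by fun_prop),
    ← tsum_lintegral_GIMajorant_mul ψ A A _ (by fun_prop), ← ENNReal.tsum_add]
  refine (ENNReal.tsum_le_tsum fun q => ?_).trans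
    (ENNReal.tsum_comp_le_tsum_of_injective (inclusion_injective (offDiag_subset_prod A)) _)
  exact enorm_setIntegral_GIProd_mul_heightWeight_le hψ horth (hA q.2.1) (hA q.2.2.1) q.2.2.2
    (measurableSet_tildeBox j k)

lemma pairIdx_subset (j k : ℕ) :
    {q : (ℕ × ℕ) × ℕ × ℕ | q.1.2 < 2 ^ q.1.1 ∧ q.2.2 < 2 ^ q.2.1 ∧
      ¬(q.1 = q.2 ∧ dySet q.1.1 q.1.2 ⊆ dySet j k)} ⊆
    (insideFamily j k).offDiag ∪
      (outsideFamily j k ×ˢ unitFamily ∪ unitFamily ×ˢ outsideFamily j k) := by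
  rintro q ⟨hq, hr, hne⟩
  by_cases hqK : q.1 ∈ insideFamily j k
  · by_cases hrK : q.2 ∈ insideFamily j k
    · exact .inl ⟨hqK, hrK, fun heq => hne ⟨heq, hqK.2⟩⟩
    · exact .inr (.inr ⟨hq, hr, hrK⟩)
  · exact .inr (.inl ⟨⟨hq, hqK⟩, hr⟩)

lemma exists_tsum_enorm_boxPairing_le {ψ : 𝓢(ℝ, ℂ)} (hψ : 𝓕 ⇑ψ =ᶠ[𝓝 0] 0)
    (horth : Pairwise fun a b : ℤ × ℤ =>
      ∫ x, psiI ψ a.1 a.2 x * conj (psiI ψ b.1 b.2 x) = 0) :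
    ∃ C : ℝ, 0 < C ∧ ∀ j k : ℕ, k < 2 ^ j →
      ∑' q : pairIdx j k, ‖boxPairing ψ j k q.1‖ₑ ≤ ENNReal.ofReal (C * len j) := by
  obtain ⟨C, hC, hdecay⟩ := exists_familyDecay hψ
  let B : ℝ := C ^ 2 * (8 * π ^ 2)
  refine ⟨24 * π ^ 2 * B + 1024 * π * B + 16 * π * B + 16 * π * B + 1, by positivity,
    fun j k hk => ?_⟩
  have hl := len_pos j
  have hout := hdecay.setLIntegral_outsideFamily_mul_le hC hk
  have hoff := (tsum_offDiag_enorm_boxPairing_le hψ horth (fun p hp => hp.1) j k).trans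
    (add_le_add (hdecay.setLIntegral_insideFamily_sq_le hC)
      (hdecay.setLIntegral_compl_insideFamily_sq_le hC hk))
  have houtUnit := (tsum_prod_enorm_boxPairing_le ψ (outsideFamily j k) unitFamily j k).trans hout
  have hunitOut := tsum_prod_enorm_boxPairing_le ψ unitFamily (outsideFamily j k) j k
  simp only [mul_comm (familyMajorant ψ unitFamily _)] at hunitOut
  have hunion := ((ENNReal.tsum_mono_subtype (‖boxPairing ψ j k ·‖ₑ) (pairIdx_subset j k)).trans
    (ENNReal.tsum_union_le (‖boxPairing ψ j k ·‖ₑ) _ _)).trans <| add_le_add hoff <|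
      (ENNReal.tsum_union_le (‖boxPairing ψ j k ·‖ₑ) _ _).trans <|
        add_le_add houtUnit (hunitOut.trans hout)
  rw [← ENNReal.ofReal_add (by positivity) (by positivity),
    ← ENNReal.ofReal_add (by positivity) (by positivity),
    ← ENNReal.ofReal_add (by positivity) (by positivity)] at hunion
  refine hunion.trans (ENNReal.ofReal_le_ofReal ?_)
  simp only [B]
  linarith

theorem stmt_7_general (ψ : 𝓢(ℝ, ℂ)) (hψ : 𝓕 ⇑ψ =ᶠ[𝓝 0] 0)
    (horth : Pairwise fun a b : ℤ × ℤ =>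
      ∫ x, psiI ψ a.1 a.2 x * conj (psiI ψ b.1 b.2 x) = 0) :
    ∃ C : ℝ, 0 < C ∧ ∀ jK kK : ℕ, kK < 2 ^ jK →
      Summable (fun q : pairIdx jK kK =>
        ‖∫ x in dySet jK kK, ∫ y in ySet jK,
            GI ψ (q.1.1.1 : ℤ) (q.1.1.2 : ℤ) x y *
              conj (GI ψ (q.1.2.1 : ℤ) (q.1.2.2 : ℤ) x y) *
              (((1 - Real.exp (-(4 * π * y))) * Real.exp (-(2 * π * y)) : ℝ) : ℂ)‖) ∧
      (∑' q : pairIdx jK kK,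
        ‖∫ x in dySet jK kK, ∫ y in ySet jK,
            GI ψ (q.1.1.1 : ℤ) (q.1.1.2 : ℤ) x y *
              conj (GI ψ (q.1.2.1 : ℤ) (q.1.2.2 : ℤ) x y) *
              (((1 - Real.exp (-(4 * π * y))) * Real.exp (-(2 * π * y)) : ℝ) : ℂ)‖)
        ≤ C * len (jK : ℤ) := by
  obtain ⟨C, hC, hbound⟩ := exists_tsum_enorm_boxPairing_le hψ horth
  refine ⟨C, hC, fun j k hk => ?_⟩
  have hle := hbound j k hk
  have hfin := ne_top_of_le_ne_top ENNReal.ofReal_ne_top hle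
  have hsummable := ENNReal.summable_toReal hfin
  have hle' := ENNReal.toReal_mono ENNReal.ofReal_ne_top hle
  rw [ENNReal.tsum_toReal_eq (ENNReal.ne_top_of_tsum_ne_top hfin),
    ENNReal.toReal_ofReal (mul_nonneg hC.le (len_pos j).le)] at hle'
  simp only [toReal_enorm, ← setIntegral_setIntegral_eq_boxPairing hψ hk] at hsummable hle'
  exact ⟨hsummable, hle'⟩

end

/-- There is a constant `C > 0`, depending only on `ψ`, such that for every dyadic
`K ⊆ [0,1)`, the sum of `|∫_{Q̃_K} G_I \bar{G_J} (1-e^{-4πy}) e^{-2πy} dx dy|` over all ordered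
pairs `(I,J)` of dyadic subintervals of `[0,1)` — except the pairs with `I = J ⊆ K` —
converges and is at most `C|K|`. -/
theorem stmt_7 (ψ : SchwartzMap ℝ ℂ)
    (hsupp : Function.support (𝓕 ⇑ψ) ⊆
      Set.Icc (-(4 / 3) : ℝ) (-(1 / 3)) ∪ Set.Icc (1 / 3) (4 / 3))
    (horth : ∀ j k j' k' : ℤ,
      (∫ x : ℝ, psiI ψ j k x * (starRingEnd ℂ) (psiI ψ j' k' x)) =
        if j = j' ∧ k = k' then 1 else 0) :
    ∃ C : ℝ, 0 < C ∧ ∀ jK kK : ℕ, kK < 2 ^ jK →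
      Summable (fun q : pairIdx jK kK =>
        ‖∫ x in dySet jK kK, ∫ y in ySet jK,
            GI ψ (q.1.1.1 : ℤ) (q.1.1.2 : ℤ) x y *
              (starRingEnd ℂ) (GI ψ (q.1.2.1 : ℤ) (q.1.2.2 : ℤ) x y) *
              (((1 - Real.exp (-(4 * π * y))) * Real.exp (-(2 * π * y)) : ℝ) : ℂ)‖) ∧
      (∑' q : pairIdx jK kK,
        ‖∫ x in dySet jK kK, ∫ y in ySet jK,
            GI ψ (q.1.1.1 : ℤ) (q.1.1.2 : ℤ) x y *
              (starRingEnd ℂ) (GI ψ (q.1.2.1 : ℤ) (q.1.2.2 : ℤ) x y) *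
              (((1 - Real.exp (-(4 * π * y))) * Real.exp (-(2 * π * y)) : ℝ) : ℂ)‖)
        ≤ C * len (jK : ℤ) := by
  refine stmt_7_general ψ ?_ fun a b hab => (horth _ _ _ _).trans (if_neg (hab ∘ Prod.ext_iff.2))
  filter_upwards [Metric.ball_mem_nhds (0 : ℝ) (by norm_num : (0 : ℝ) < 1 / 3)] with ξ hξ
  rw [Metric.mem_ball, dist_zero_right, Real.norm_eq_abs, abs_lt] at hξ
  by_contra hne
  rcases hsupp hne with h | h <;> linarith [h.1, h.2]
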